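/- Let C be a category of noncrossing colored partitions and let l ≥ 1 be the smallest positive integer such that β_l ∈ C (assuming one exists). Then every projective partition p ∈ C(k,k) with no through-blocks (t(p) = 0) is equivalent in C to β_l^{⊗m} or to β_{-l}^{⊗m} for some integer m ≥ 0 (with β_l^{⊗0} the empty partition). Consequently the group of equivalence classes of non-through projective partitions in C under ⊗ is cyclic. -/

import Mathlib

open scoped Classical

/-- A two-colored partition with `k` upper and `l` lower points; `true` = white. -/
structure CPartition where
  k : ℕ
  l : ℕ
  uc : Fin k → Bool
  lc : Fin l → Bool
  rel : Setoid (Fin k ⊕ Fin l)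

namespace CPartition

/-- The disjoint union of two setoids. -/
def sumSetoid {X Y : Type*} (p : Setoid X) (q : Setoid Y) : Setoid (X ⊕ Y) where
  r := Sum.LiftRel p.r q.r
  iseqv := by
    refine ⟨fun x => ?_, fun h => ?_, fun h h' => ?_⟩
    · cases x with
      | inl a => exact Sum.LiftRel.inl (p.iseqv.refl a)
      | inr b => exact Sum.LiftRel.inr (q.iseqv.refl b)
    · cases h with
      | inl h => exact Sum.LiftRel.inl (p.iseqv.symm h)
      | inr h => exact Sum.LiftRel.inr (q.iseqv.symm h)
    · cases h with
      | inl h =>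
        cases h' with
        | inl h' => exact Sum.LiftRel.inl (p.iseqv.trans h h')
      | inr h =>
        cases h' with
        | inr h' => exact Sum.LiftRel.inr (q.iseqv.trans h h')

/-- Horizontal concatenation `p ⊗ q`. -/
def tensor (p q : CPartition) : CPartition where
  k := p.k + q.k
  l := p.l + q.l
  uc := fun i => Sum.elim p.uc q.uc (finSumFinEquiv.symm i)
  lc := fun j => Sum.elim p.lc q.lc (finSumFinEquiv.symm j)
  rel := Setoid.comap
    (fun x => Equiv.sumSumSumComm (Fin p.k) (Fin q.k) (Fin p.l) (Fin q.l)
      (Sum.map (fun i => finSumFinEquiv.symm i) (fun j => finSumFinEquiv.symm j) x))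
    (sumSetoid p.rel q.rel)

/-- Reflection `p*` (exchange the two rows, keeping colors). -/
def reflect (p : CPartition) : CPartition where
  k := p.l
  l := p.k
  uc := p.lc
  lc := p.uc
  rel := Setoid.comap Sum.swap p.rel

/-- The conjugate partition `p̄` : rotate all upper points to the lower row and
conversely (order is reversed and colors are switched). -/
def conj (p : CPartition) : CPartition where
  k := p.l
  l := p.k
  uc := fun i => !(p.lc i.rev)
  lc := fun j => !(p.uc j.rev)
  rel := Setoid.comap
    (Sum.elim (fun i => Sum.inr i.rev) (fun j => Sum.inl j.rev)) p.rel

/-- Vertical concatenation: `p` on top, then `q` below (requires `p.l = q.k`).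
Points of the middle row are identified and removed, blocks being joined along them. -/
def vcomp (p q : CPartition) (h : p.l = q.k) : CPartition where
  k := p.k
  l := q.l
  uc := p.uc
  lc := q.lc
  rel := Setoid.comap (Sum.map id Sum.inr)
    (Relation.EqvGen.setoid (fun x y : Fin p.k ⊕ (Fin p.l ⊕ Fin q.l) =>
      (∃ a b, p.rel.r a b ∧ Sum.map id Sum.inl a = x ∧ Sum.map id Sum.inl b = y) ∨
      (∃ a b, q.rel.r a b ∧
        Sum.inr (Sum.map (Fin.cast h.symm) id a) = x ∧
        Sum.inr (Sum.map (Fin.cast h.symm) id b) = y)))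

/-- Rotation: move the leftmost upper point to the leftmost lower position,
switching its color. -/
def rotDown (p : CPartition) (m : ℕ) (h : p.k = m + 1) : CPartition where
  k := m
  l := p.l + 1
  uc := fun i => p.uc (Fin.cast h.symm i.succ)
  lc := fun j => Fin.cases (!(p.uc (Fin.cast h.symm 0))) p.lc j
  rel := Setoid.comap
    (Sum.elim (fun i => Sum.inl (Fin.cast h.symm i.succ))
      (fun j => Fin.cases (Sum.inl (Fin.cast h.symm (0 : Fin (m + 1))))
        (fun j' => Sum.inr j') j)) p.rel

/-- Rotation: move the leftmost lower point to the leftmost upper position,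
switching its color. -/
def rotUp (p : CPartition) (m : ℕ) (h : p.l = m + 1) : CPartition where
  k := p.k + 1
  l := m
  uc := fun i => Fin.cases (!(p.lc (Fin.cast h.symm 0))) p.uc i
  lc := fun j => p.lc (Fin.cast h.symm j.succ)
  rel := Setoid.comap
    (Sum.elim (fun i => Fin.cases (Sum.inr (Fin.cast h.symm (0 : Fin (m + 1))))
        (fun i' => Sum.inl i') i)
      (fun j => Sum.inr (Fin.cast h.symm j.succ))) p.rel

/-- The identity partition with coloring `c`. -/
def idPart {n : ℕ} (c : Fin n → Bool) : CPartition where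
  k := n
  l := n
  uc := c
  lc := c
  rel := Setoid.ker (Sum.elim id id)

/-- A block (class) of `p` is a through-block when it contains both an upper
and a lower point. -/
def IsThrough (p : CPartition) (c : Quotient p.rel) : Prop :=
  (∃ i : Fin p.k, Quotient.mk p.rel (Sum.inl i) = c) ∧
    (∃ j : Fin p.l, Quotient.mk p.rel (Sum.inr j) = c)

/-- The number `t(p)` of through-blocks of `p`. -/
noncomputable def t (p : CPartition) : ℕ := Nat.card {c : Quotient p.rel // p.IsThrough c}

/-- A projective partition: `pp = p = p*`. -/
def IsProjective (p : CPartition) : Prop :=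
  ∃ h : p.l = p.k, vcomp p p h = p ∧ reflect p = p

/-- Equivalence of projective partitions in `C` : `p ∼ q` iff `r*r = p`, `rr* = q`
for some `r ∈ C`. -/
def EquivIn (C : Set CPartition) (p q : CPartition) : Prop :=
  ∃ r ∈ C, vcomp r (reflect r) rfl = p ∧ vcomp (reflect r) r rfl = q

/-- Position of a point in the counterclockwise planar order. -/
def ptIdx (p : CPartition) : Fin p.k ⊕ Fin p.l → ℕ :=
  Sum.elim (fun i => (i : ℕ)) (fun j => p.k + (p.l - 1 - (j : ℕ)))

/-- A partition is noncrossing when its strings can be drawn without crossings. -/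
def NonCrossing (p : CPartition) : Prop :=
  ∀ a b c d : Fin p.k ⊕ Fin p.l,
    p.ptIdx a < p.ptIdx b → p.ptIdx b < p.ptIdx c → p.ptIdx c < p.ptIdx d →
    p.rel.r a c → p.rel.r b d → p.rel.r a b

/-- The one-block projective partition on `k + k` points, all colored `c`. -/
def piP (k : ℕ) (c : Bool) : CPartition :=
  ⟨k, k, fun _ => c, fun _ => c, ⊤⟩

/-- `π_k` for `k ∈ ℤ \ {0}` : one block, `|k| + |k|` points, white if `k > 0`,
black if `k < 0`. -/
def piZ (k : ℤ) : CPartition := piP k.natAbs (decide (0 < k))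

/-- `π_{0⁺}`, the one-block projective partition with rows colored white–black. -/
def pi0plus : CPartition :=
  ⟨2, 2, ![true, false], ![true, false], ⊤⟩

/-- `θ_k` : one block of `k` points of color `c` on one row. -/
def thetaP (k : ℕ) (c : Bool) : CPartition :=
  ⟨k, 0, fun _ => c, Fin.elim0, ⊤⟩

/-- `β_k = θ_k* θ_k` : one upper block and one lower block of `k` points each,
all of color `c`. -/
def betaP (k : ℕ) (c : Bool) : CPartition :=
  ⟨k, k, fun _ => c, fun _ => c, sumSetoid ⊤ ⊤⟩

/-- `β_k` for `k : ℤ` (white if `k > 0`, black if `k < 0`, empty if `k = 0`). -/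
def betaZ (k : ℤ) : CPartition := betaP k.natAbs (decide (0 < k))

/-- Tensor powers, `tpow p 0` being the empty partition. -/
def tpow (p : CPartition) : ℕ → CPartition
  | 0 => betaP 0 true
  | m + 1 => tensor (tpow p m) p

end CPartition

open CPartition

/-- A category of two-colored partitions: a class of partitions containing the
white identity and stable under horizontal concatenation, vertical concatenation
(when the colorings match), reflection and rotations. -/
structure PartitionCategory where
  mem : Set CPartition
  id_mem : idPart (fun _ : Fin 1 => true) ∈ mem
  tensor_mem : ∀ p q, p ∈ mem → q ∈ mem → tensor p q ∈ mem
  vcomp_mem : ∀ p q (h : p.l = q.k), p ∈ mem → q ∈ mem →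
    (∀ j, p.lc j = q.uc (Fin.cast h j)) → vcomp p q h ∈ mem
  reflect_mem : ∀ p, p ∈ mem → reflect p ∈ mem
  rotDown_mem : ∀ p, p ∈ mem → ∀ m (h : p.k = m + 1), rotDown p m h ∈ mem
  rotUp_mem : ∀ p, p ∈ mem → ∀ m (h : p.l = m + 1), rotUp p m h ∈ mem

namespace NT

/-- Ways of changing labels of a labelled colored word. -/
def rl {α β : Type} (f : α → β) (A : List (Bool × α)) : List (Bool × β) :=
  A.map (fun x => (x.1, f x.2))

/-- Reversal together with color change. -/
def bar {α : Type} (A : List (Bool × α)) : List (Bool × α) :=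
  (A.map (fun x => (!x.1, x.2))).reverse

/-- The labels of a word. -/
def lab {α : Type} (A : List (Bool × α)) : List α := A.map Prod.snd

section basic
variable {α β γ δ : Type}

@[simp] lemma rl_nil (f : α → β) : rl f [] = [] := rfl
@[simp] lemma rl_cons (f : α → β) (x : Bool × α) (A : List (Bool × α)) :
    rl f (x :: A) = (x.1, f x.2) :: rl f A := rfl
@[simp] lemma rl_append (f : α → β) (A B : List (Bool × α)) :
    rl f (A ++ B) = rl f A ++ rl f B := by simp [rl]
@[simp] lemma rl_rl (f : α → β) (g : β → γ) (A : List (Bool × α)) :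
    rl g (rl f A) = rl (fun a => g (f a)) A := by simp [rl, Function.comp_def]
@[simp] lemma rl_length (f : α → β) (A : List (Bool × α)) : (rl f A).length = A.length := by
  simp [rl]
@[simp] lemma bar_nil : bar ([] : List (Bool × α)) = [] := rfl
@[simp] lemma bar_cons (x : Bool × α) (A : List (Bool × α)) :
    bar (x :: A) = bar A ++ [(!x.1, x.2)] := by simp [bar]
@[simp] lemma bar_append (A B : List (Bool × α)) : bar (A ++ B) = bar B ++ bar A := by
  simp [bar]
@[simp] lemma bar_bar (A : List (Bool × α)) : bar (bar A) = A := by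
  induction A with
  | nil => rfl
  | cons x A ih => simp [ih]
@[simp] lemma bar_length (A : List (Bool × α)) : (bar A).length = A.length := by simp [bar]
lemma bar_rl (f : α → β) (A : List (Bool × α)) : bar (rl f A) = rl f (bar A) := by
  induction A with
  | nil => rfl
  | cons x A ih => simp [ih]
@[simp] lemma lab_nil : lab ([] : List (Bool × α)) = [] := rfl
@[simp] lemma lab_cons (x : Bool × α) (A : List (Bool × α)) :
    lab (x :: A) = x.2 :: lab A := rfl
@[simp] lemma lab_append (A B : List (Bool × α)) : lab (A ++ B) = lab A ++ lab B := by simp [lab]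
@[simp] lemma lab_rl (f : α → β) (A : List (Bool × α)) : lab (rl f A) = (lab A).map f := by
  simp [lab, rl]
@[simp] lemma lab_bar (A : List (Bool × α)) : lab (bar A) = (lab A).reverse := by
  simp [lab, bar, Function.comp_def]
lemma rl_congr {f g : α → β} {A : List (Bool × α)} (h : ∀ a ∈ lab A, f a = g a) :
    rl f A = rl g A := by
  simp only [rl]
  apply List.map_congr_left
  intro x hx
  rw [h x.2 (List.mem_map_of_mem hx)]
lemma rl_id' {f : α → α} {A : List (Bool × α)} (h : ∀ a ∈ lab A, f a = a) : rl f A = A := by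
  rw [rl_congr h]; simp [rl]
lemma rl_inj {f g : α → β} {A : List (Bool × α)} (h : rl f A = rl g A) :
    ∀ a ∈ lab A, f a = g a := by
  induction A with
  | nil => simp
  | cons x A ih =>
    simp only [rl_cons, List.cons.injEq, Prod.mk.injEq, true_and] at h
    intro a ha
    simp only [lab_cons, List.mem_cons] at ha
    rcases ha with rfl | ha
    · exact h.1
    · exact ih h.2 a ha

/-- The partition with upper row `A` and lower row `B`, blocks given by labels. -/
def Part (A B : List (Bool × α)) : CPartition where
  k := A.length
  l := B.length
  uc := fun i => (A.get i).1
  lc := fun i => (B.get i).1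
  rel := Setoid.ker (Sum.elim (fun i => (A.get i).2) (fun i => (B.get i).2))

lemma cext {p q : CPartition} (hk : p.k = q.k) (hl : p.l = q.l)
    (hu : ∀ i, p.uc i = q.uc (Fin.cast hk i)) (hlc : ∀ i, p.lc i = q.lc (Fin.cast hl i))
    (hr : ∀ x y, p.rel.r x y ↔ q.rel.r (Sum.map (Fin.cast hk) (Fin.cast hl) x)
      (Sum.map (Fin.cast hk) (Fin.cast hl) y)) : p = q := by
  rcases p with ⟨k, l, uc, lc, rel⟩
  rcases q with ⟨k', l', uc', lc', rel'⟩
  simp only at hk hl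
  subst hk hl
  have h1 : uc = uc' := funext hu
  have h2 : lc = lc' := funext hlc
  have h3 : rel = rel' := by
    ext x y
    have := hr x y
    simpa using this
  rw [h1, h2, h3]

lemma part_rel (A B : List (Bool × α)) (x y) : (Part A B).rel.r x y ↔
    Sum.elim (fun i : Fin A.length => (A.get i).2) (fun i : Fin B.length => (B.get i).2) x =
    Sum.elim (fun i => (A.get i).2) (fun i => (B.get i).2) y := Iff.rfl

lemma get_mem_lab (A : List (Bool × α)) (i : Fin A.length) : (A.get i).2 ∈ lab A :=
  List.mem_map_of_mem (List.get_mem A i)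

lemma get_some (A : List (Bool × α)) (i : Fin A.length) :
    A[i.1]? = some ((A.get i).1, (A.get i).2) := by simp

lemma rl_get (f : α → β) (A : List (Bool × α)) (i : Fin A.length) :
    (rl f A)[i.1]? = some ((A.get i).1, f (A.get i).2) := by simp [rl]

lemma part_of (p : CPartition) (A B : List (Bool × γ)) (φ : Fin p.k ⊕ Fin p.l → γ)
    (hk : p.k = A.length) (hl : p.l = B.length)
    (hA : ∀ i : Fin p.k, A[i.1]? = some (p.uc i, φ (Sum.inl i)))
    (hB : ∀ i : Fin p.l, B[i.1]? = some (p.lc i, φ (Sum.inr i)))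
    (hr : ∀ x y, p.rel.r x y ↔ φ x = φ y) : p = Part A B := by
  have hA' : ∀ i : Fin p.k, A.get (Fin.cast hk i) = (p.uc i, φ (Sum.inl i)) := by
    intro i
    have h1 : i.1 < A.length := hk ▸ i.2
    have := hA i
    rw [List.getElem?_eq_getElem h1] at this
    exact Option.some.inj this
  have hB' : ∀ i : Fin p.l, B.get (Fin.cast hl i) = (p.lc i, φ (Sum.inr i)) := by
    intro i
    have h1 : i.1 < B.length := hl ▸ i.2
    have := hB i
    rw [List.getElem?_eq_getElem h1] at this
    exact Option.some.inj this
  refine cext hk hl (fun i => (congrArg Prod.fst (hA' i)).symm)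
    (fun i => (congrArg Prod.fst (hB' i)).symm) ?_
  have key : ∀ x : Fin p.k ⊕ Fin p.l,
      Sum.elim (fun i : Fin A.length => (A.get i).2) (fun i : Fin B.length => (B.get i).2)
      (Sum.map (Fin.cast hk) (Fin.cast hl) x) = φ x := by
    rintro (i | i)
    · exact congrArg Prod.snd (hA' i)
    · exact congrArg Prod.snd (hB' i)
  intro x y
  rw [hr, part_rel]
  exact Iff.of_eq (congrArg₂ Eq (key x) (key y)).symm

lemma part_rl (f : α → β) (A B : List (Bool × α))
    (hf : ∀ x ∈ lab (A ++ B), ∀ y ∈ lab (A ++ B), f x = f y → x = y) :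
    Part (rl f A) (rl f B) = Part A B := by
  symm
  refine part_of _ _ _ (fun x => f (Sum.elim (fun i : Fin A.length => (A.get i).2)
    (fun i : Fin B.length => (B.get i).2) x)) (by simp [Part]) (by simp [Part]) ?_ ?_ ?_
  · intro i; exact rl_get f A i
  · intro i; exact rl_get f B i
  · intro x y
    rw [part_rel]
    refine ⟨fun h => congrArg f h, fun h => hf _ ?_ _ ?_ h⟩
    · rw [lab_append]
      rcases x with i | i
      · exact List.mem_append_left _ (get_mem_lab A i)
      · exact List.mem_append_right _ (get_mem_lab B i)
    · rw [lab_append]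
      rcases y with i | i
      · exact List.mem_append_left _ (get_mem_lab A i)
      · exact List.mem_append_right _ (get_mem_lab B i)

lemma part_reflect (A B : List (Bool × α)) : reflect (Part A B) = Part B A := by
  refine cext rfl rfl (fun i => rfl) (fun i => rfl) ?_
  rintro (i | i) (j | j) <;> exact Iff.rfl

lemma part_rotDown (x : Bool × α) (A B : List (Bool × α)) :
    rotDown (Part (x :: A) B) A.length rfl = Part A ((!x.1, x.2) :: B) := by
  refine part_of _ _ _ (fun z => Sum.elim (fun i => ((x :: A).get i).2) (fun i => (B.get i).2)
        ((Sum.elim (fun i => Sum.inl i.succ)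
      (fun j => Fin.cases (Sum.inl (0 : Fin (A.length + 1)))
        (fun j' => Sum.inr j') j) : _ → Fin (A.length + 1) ⊕ Fin B.length) z)) rfl rfl ?_ ?_ ?_
  · intro i
    exact get_some A i
  · intro i
    refine Fin.cases ?_ (fun j => ?_) i
    · rfl
    · exact get_some B j
  · intro y z
    exact Iff.rfl

lemma part_rotUp (x : Bool × α) (A B : List (Bool × α)) :
    rotUp (Part A (x :: B)) B.length rfl = Part ((!x.1, x.2) :: A) B := by
  refine part_of _ _ _ (fun z => Sum.elim (fun i => (A.get i).2) (fun i => ((x :: B).get i).2)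
        ((Sum.elim (fun j => Fin.cases (Sum.inr (0 : Fin (B.length + 1)))
        (fun j' => Sum.inl j') j) (fun i => Sum.inr i.succ)
        : _ → Fin A.length ⊕ Fin (B.length + 1)) z)) rfl rfl ?_ ?_ ?_
  · intro i
    refine Fin.cases ?_ (fun j => ?_) i
    · rfl
    · exact get_some A j
  · intro i
    exact get_some B i
  · intro y z
    exact Iff.rfl

/-- Disjoint juxtaposition of words. -/
def tn (A : List (Bool × α)) (B : List (Bool × β)) : List (Bool × (α ⊕ β)) :=
  rl Sum.inl A ++ rl Sum.inr B

lemma tn_get (A : List (Bool × α)) (A' : List (Bool × β)) (i : Fin (A.length + A'.length)) :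
      (tn A A')[i.1]? =
      some (Sum.elim (fun i => ((A.get i).1, Sum.inl (A.get i).2))
        (fun i => ((A'.get i).1, Sum.inr (A'.get i).2)) (finSumFinEquiv.symm i)) := by
    obtain ⟨i, rfl⟩ := finSumFinEquiv.surjective i
    rcases i with i | i
    · simp [tn, rl, List.getElem?_append]
    · simp [tn, rl]

lemma part_tensor (A B : List (Bool × α)) (A' B' : List (Bool × β)) :
    tensor (Part A B) (Part A' B') = Part (tn A A') (tn B B') := by
  refine part_of _ _ _ (fun x => Sum.map (Sum.elim (fun i => (A.get i).2) (fun i => (B.get i).2))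
        (Sum.elim (fun i => (A'.get i).2) (fun i => (B'.get i).2))
        (Equiv.sumSumSumComm (Fin A.length) (Fin A'.length) (Fin B.length) (Fin B'.length)
      (Sum.map (fun i => finSumFinEquiv.symm i) (fun j => finSumFinEquiv.symm j) x)))
      (by simp [tensor, Part, tn]) (by simp [tensor, Part, tn]) ?_ ?_ ?_
  · intro i
    refine (tn_get A A' i).trans ?_
    have e : ∀ j : Fin A.length ⊕ Fin A'.length,
      Sum.elim (fun i => ((A.get i).1, Sum.inl (A.get i).2))
        (fun i => ((A'.get i).1, Sum.inr (A'.get i).2)) j =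
      (Sum.elim (fun i => (A.get i).1) (fun i => (A'.get i).1) j,
        Sum.map (Sum.elim (fun i => (A.get i).2) (fun i => (B.get i).2))
        (Sum.elim (fun i => (A'.get i).2) (fun i => (B'.get i).2))
        (Equiv.sumSumSumComm (Fin A.length) (Fin A'.length) (Fin B.length) (Fin B'.length)
          (Sum.inl j))) := by
      rintro (j | j) <;> rfl
    exact congrArg some (e (finSumFinEquiv.symm i))
  · intro i
    refine (tn_get B B' i).trans ?_
    have e : ∀ j : Fin B.length ⊕ Fin B'.length,
      Sum.elim (fun i => ((B.get i).1, Sum.inl (B.get i).2))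
        (fun i => ((B'.get i).1, Sum.inr (B'.get i).2)) j =
      (Sum.elim (fun i => (B.get i).1) (fun i => (B'.get i).1) j,
        Sum.map (Sum.elim (fun i => (A.get i).2) (fun i => (B.get i).2))
        (Sum.elim (fun i => (A'.get i).2) (fun i => (B'.get i).2))
        (Equiv.sumSumSumComm (Fin A.length) (Fin A'.length) (Fin B.length) (Fin B'.length)
          (Sum.inr j))) := by
      rintro (j | j) <;> rfl
    exact congrArg some (e (finSumFinEquiv.symm i))
  · intro x y
    change Sum.LiftRel (fun a b => (Part A B).rel.r a b) (fun a b => (Part A' B').rel.r a b)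
      (Equiv.sumSumSumComm (Fin A.length) (Fin A'.length) (Fin B.length) (Fin B'.length)
      (Sum.map (fun i => finSumFinEquiv.symm i) (fun j => finSumFinEquiv.symm j) x))
      (Equiv.sumSumSumComm (Fin A.length) (Fin A'.length) (Fin B.length) (Fin B'.length)
      (Sum.map (fun i => finSumFinEquiv.symm i) (fun j => finSumFinEquiv.symm j) y)) ↔ _
    generalize Equiv.sumSumSumComm (Fin A.length) (Fin A'.length) (Fin B.length) (Fin B'.length)
      (Sum.map (fun i => finSumFinEquiv.symm i) (fun j => finSumFinEquiv.symm j) x) = u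
    generalize Equiv.sumSumSumComm (Fin A.length) (Fin A'.length) (Fin B.length) (Fin B'.length)
      (Sum.map (fun i => finSumFinEquiv.symm i) (fun j => finSumFinEquiv.symm j) y) = v
    rcases u with u | u <;> rcases v with v | v
    · exact Sum.liftRel_inl_inl.trans (Sum.inl_injective.eq_iff).symm
    · exact ⟨fun h => (by cases h), fun h => (by cases h)⟩
    · exact ⟨fun h => (by cases h), fun h => (by cases h)⟩
    · exact Sum.liftRel_inr_inr.trans (Sum.inr_injective.eq_iff).symm

lemma part_vcomp (A B : List (Bool × α)) (B' D : List (Bool × β)) (g₁ : α → γ) (g₂ : β → γ)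
    (hB : rl g₁ B = rl g₂ B')
    (hu : ∀ (h₁ : α → Prop) (h₂ : β → Prop), rl h₁ B = rl h₂ B' →
      ∃ k : γ → Prop, (∀ a ∈ lab A, k (g₁ a) = h₁ a) ∧ (∀ a ∈ lab D, k (g₂ a) = h₂ a))
    (h : (Part A B).l = (Part B' D).k) :
    vcomp (Part A B) (Part B' D) h = Part (rl g₁ A) (rl g₂ D) := by
  have hlen : B.length = B'.length := h
  refine part_of _ _ _ (Sum.elim (fun i : Fin A.length => g₁ (A.get i).2)
    (fun i : Fin D.length => g₂ (D.get i).2))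
    (by simp [vcomp, Part]) (by simp [vcomp, Part]) ?_ ?_ ?_
  · intro i
    exact rl_get g₁ A i
  · intro i
    exact rl_get g₂ D i
  · have hcompat : ∀ {ε : Type} (f₁ : α → ε) (f₂ : β → ε), rl f₁ B = rl f₂ B' →
        ∀ i : Fin B'.length, f₁ (B.get (Fin.cast hlen.symm i)).2 = f₂ (B'.get i).2 := by
      intro ε f₁ f₂ hf i
      have h1 := congrArg (fun l => l[i.1]?) hf
      have h2 : i.1 < B.length := lt_of_lt_of_eq i.2 hlen.symm
      simp only [rl, List.getElem?_map, List.getElem?_eq_getElem h2,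
        List.getElem?_eq_getElem i.2, Option.map_some, Option.some.injEq, Prod.mk.injEq] at h1
      exact h1.2
    set R := (fun x y : Fin A.length ⊕ (Fin B.length ⊕ Fin D.length) =>
      (∃ a b, (Part A B).rel.r a b ∧ Sum.map id Sum.inl a = x ∧ Sum.map id Sum.inl b = y) ∨
      (∃ a b, (Part B' D).rel.r a b ∧
        Sum.inr (Sum.map (Fin.cast h.symm) id a) = x ∧
        Sum.inr (Sum.map (Fin.cast h.symm) id b) = y)) with hR
    intro x y
    change Relation.EqvGen R (Sum.map id Sum.inr x) (Sum.map id Sum.inr y) ↔ _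
    let G : Fin A.length ⊕ (Fin B.length ⊕ Fin D.length) → γ :=
      Sum.elim (fun i => g₁ (A.get i).2)
        (Sum.elim (fun i => g₁ (B.get i).2) (fun i => g₂ (D.get i).2))
    have hG : ∀ u v, Relation.EqvGen R u v → G u = G v := by
      intro u v huv
      induction huv with
      | rel u v huv =>
        rcases huv with ⟨a, b, hab, rfl, rfl⟩ | ⟨a, b, hab, rfl, rfl⟩
        · rw [part_rel] at hab
          have e : ∀ a : Fin A.length ⊕ Fin B.length, G (Sum.map id Sum.inl a) =
            g₁ (Sum.elim (fun i => (A.get i).2) (fun i => (B.get i).2) a) := by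
            rintro (i | i) <;> rfl
          exact (e a).trans ((congrArg g₁ hab).trans (e b).symm)
        · rw [part_rel] at hab
          have e : ∀ a : Fin B'.length ⊕ Fin D.length,
            G (Sum.inr (Sum.map (Fin.cast h.symm) id a)) =
            g₂ (Sum.elim (fun i => (B'.get i).2) (fun i => (D.get i).2) a) := by
            rintro (i | i)
            · exact hcompat g₁ g₂ hB i
            · rfl
          exact (e a).trans ((congrArg g₂ hab).trans (e b).symm)
      | refl u => rfl
      | symm u v _ ih => exact ih.symm
      | trans u v w _ _ ih1 ih2 => exact ih1.trans ih2
    have eG : ∀ x : Fin A.length ⊕ Fin D.length, G (Sum.map id Sum.inr x) =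
        Sum.elim (fun i : Fin A.length => g₁ (A.get i).2)
          (fun i : Fin D.length => g₂ (D.get i).2) x := by
      rintro (i | i) <;> rfl
    refine ⟨fun hxy => (eG x).symm.trans ((hG _ _ hxy).trans (eG y)), fun hxy => ?_⟩
    let x' : Fin A.length ⊕ (Fin B.length ⊕ Fin D.length) := Sum.map id Sum.inr x
    let h₁ : α → Prop := fun a => ∃ i : Fin A.length ⊕ Fin B.length,
      Sum.elim (fun i => (A.get i).2) (fun i => (B.get i).2) i = a ∧
      Relation.EqvGen R x' (Sum.map id Sum.inl i)
    let h₂ : β → Prop := fun a => ∃ i : Fin B'.length ⊕ Fin D.length,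
      Sum.elim (fun i => (B'.get i).2) (fun i => (D.get i).2) i = a ∧
      Relation.EqvGen R x' (Sum.inr (Sum.map (Fin.cast h.symm) id i))
    have E1 : ∀ i, h₁ (Sum.elim (fun i => (A.get i).2) (fun i => (B.get i).2) i) ↔
        Relation.EqvGen R x' (Sum.map id Sum.inl i) := by
      intro i
      refine ⟨fun ⟨j, hj, hj'⟩ => hj'.trans _ _ _ (Relation.EqvGen.rel _ _ ?_),
        fun hi => ⟨i, rfl, hi⟩⟩
      exact Or.inl ⟨j, i, hj, rfl, rfl⟩
    have E2 : ∀ i, h₂ (Sum.elim (fun i => (B'.get i).2) (fun i => (D.get i).2) i) ↔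
        Relation.EqvGen R x' (Sum.inr (Sum.map (Fin.cast h.symm) id i)) := by
      intro i
      refine ⟨fun ⟨j, hj, hj'⟩ => hj'.trans _ _ _ (Relation.EqvGen.rel _ _ ?_),
        fun hi => ⟨i, rfl, hi⟩⟩
      exact Or.inr ⟨j, i, hj, rfl, rfl⟩
    have hc : rl h₁ B = rl h₂ B' := by
      apply List.ext_getElem (by simp [hlen])
      intro i hi hi'
      have hcol := congrArg (fun l => l[i]?) hB
      have h2 : i < B.length := by simpa using hi
      have h3 : i < B'.length := by simpa using hi'
      simp only [rl, List.getElem?_map, List.getElem?_eq_getElem h2,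
        List.getElem?_eq_getElem h3, Option.map_some, Option.some.injEq, Prod.mk.injEq] at hcol
      simp only [rl, List.getElem_map, Prod.mk.injEq]
      refine ⟨hcol.1, propext ?_⟩
      exact (E1 (Sum.inr ⟨i, h2⟩)).trans (E2 (Sum.inl ⟨i, h3⟩)).symm
    obtain ⟨k, hk1, hk2⟩ := hu h₁ h₂ hc
    have F : ∀ z : Fin A.length ⊕ Fin D.length,
        k (Sum.elim (fun i : Fin A.length => g₁ (A.get i).2)
          (fun i : Fin D.length => g₂ (D.get i).2) z) ↔
        Relation.EqvGen R x' (Sum.map id Sum.inr z) := by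
      rintro (i | i)
      · refine (Iff.of_eq (hk1 _ (get_mem_lab A i))).trans (E1 (Sum.inl i))
      · refine (Iff.of_eq (hk2 _ (get_mem_lab D i))).trans (E2 (Sum.inr i))
    have := (F x).2 (Relation.EqvGen.refl _)
    exact (F y).1 ((congrArg k hxy).mp this)

end basic
section cat
variable {α β γ δ : Type} {C : PartitionCategory}

/-- Membership of a labelled partition. -/
def M (C : PartitionCategory) (A B : List (Bool × α)) : Prop := Part A B ∈ C.mem

/-- Membership of a labelled word, seen as a partition on the lower row. -/
def L (C : PartitionCategory) (w : List (Bool × α)) : Prop := M C [] w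

lemma M_rotDown {x : Bool × α} {A B : List (Bool × α)} (h : M C (x :: A) B) :
    M C A ((!x.1, x.2) :: B) := by
  have := C.rotDown_mem _ h A.length rfl
  rwa [part_rotDown] at this

lemma M_rotUp {x : Bool × α} {A B : List (Bool × α)} (h : M C A (x :: B)) :
    M C ((!x.1, x.2) :: A) B := by
  have := C.rotUp_mem _ h B.length rfl
  rwa [part_rotUp] at this

lemma M_iff {A B : List (Bool × α)} : M C A B ↔ L C (bar A ++ B) := by
  induction A generalizing B with
  | nil => rfl
  | cons x A ih =>
    have : bar (x :: A) ++ B = bar A ++ ((!x.1, x.2) :: B) := by simp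
    rw [this, ← ih]
    refine ⟨M_rotDown, fun h => ?_⟩
    have := M_rotUp h
    simpa using this

lemma M_rl {A B : List (Bool × α)} {f : α → β}
    (hf : ∀ x ∈ lab (A ++ B), ∀ y ∈ lab (A ++ B), f x = f y → x = y) :
    M C (rl f A) (rl f B) ↔ M C A B := by
  unfold M
  rw [part_rl f A B hf]

lemma L_rl {w : List (Bool × α)} {f : α → β}
    (hf : ∀ x ∈ lab w, ∀ y ∈ lab w, f x = f y → x = y) : L C (rl f w) ↔ L C w :=
  M_rl (A := []) (B := w) hf

lemma L_rl' {w : List (Bool × α)} {f : α → β} (hf : Function.Injective f) :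
    L C (rl f w) ↔ L C w := L_rl (fun _ _ _ _ h => hf h)

lemma M_reflect {A B : List (Bool × α)} (h : M C A B) : M C B A := by
  have := C.reflect_mem _ h
  rwa [part_reflect] at this

lemma M_tensor {A B : List (Bool × α)} {A' B' : List (Bool × β)} (h : M C A B)
    (h' : M C A' B') : M C (tn A A') (tn B B') := by
  have := C.tensor_mem _ _ h h'
  rwa [part_tensor] at this

lemma M_vcomp {A B : List (Bool × α)} {B' D : List (Bool × β)} (h : M C A B) (h' : M C B' D)
    (g₁ : α → γ) (g₂ : β → γ) (hB : rl g₁ B = rl g₂ B')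
    (hu : ∀ (h₁ : α → Prop) (h₂ : β → Prop), rl h₁ B = rl h₂ B' →
      ∃ k : γ → Prop, (∀ a ∈ lab A, k (g₁ a) = h₁ a) ∧ (∀ a ∈ lab D, k (g₂ a) = h₂ a)) :
    M C (rl g₁ A) (rl g₂ D) := by
  have hlen : B.length = B'.length := by simpa using congrArg List.length hB
  have := C.vcomp_mem _ _ (show (Part A B).l = (Part B' D).k from hlen) h h' (fun j => by
    have h1 := congrArg (fun l => l[j.1]?) hB
    have h2 : j.1 < B.length := j.2
    have h3 : j.1 < B'.length := lt_of_lt_of_eq h2 hlen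
    simp only [rl, List.getElem?_map, List.getElem?_eq_getElem h2,
        List.getElem?_eq_getElem h3, Option.map_some, Option.some.injEq, Prod.mk.injEq] at h1
    exact h1.1)
  rwa [part_vcomp A B B' D g₁ g₂ hB hu] at this

lemma L_bar {w : List (Bool × α)} (h : L C w) : L C (bar w) := by
  have := M_iff.1 (M_reflect h)
  simpa using this

lemma L_bar_iff {w : List (Bool × α)} : L C (bar w) ↔ L C w :=
  ⟨fun h => by simpa using L_bar h, L_bar⟩

lemma L_pair : L C [(false, ()), (true, ())] := by
  have h : idPart (fun _ : Fin 1 => true) = Part [(true, ())] [(true, ())] := by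
    refine part_of _ _ _ (fun _ => ()) rfl rfl ?_ ?_ ?_
    · intro i; fin_cases i; rfl
    · intro i; fin_cases i; rfl
    · intro x y
      refine ⟨fun _ => rfl, fun _ => ?_⟩
      exact Subsingleton.elim (α := Fin 1) _ _
  have h2 := C.id_mem
  rw [h] at h2
  exact M_iff.1 h2

/-- Substitution of a subword. -/
lemma L_sub {U X V : List (Bool × α)} {X' Y : List (Bool × β)} (g₁ : α → γ) (g₂ : β → γ)
    (hL : L C (U ++ X ++ V)) (hq : L C (bar X' ++ Y)) (hB : rl g₁ X = rl g₂ X')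
    (hu : ∀ (h₁ : α → Prop) (h₂ : β → Prop), rl h₁ X = rl h₂ X' →
      ∃ k : γ → Prop, (∀ a ∈ lab (U ++ V), k (g₁ a) = h₁ a) ∧
        (∀ a ∈ lab Y, k (g₂ a) = h₂ a)) :
    L C (rl g₁ U ++ rl g₂ Y ++ rl g₁ V) := by
  set W := U ++ X with hW
  let j : α → α × Bool := fun a => (a, decide (a ∉ lab W))
  have hQ : M C (rl (fun a => (a, false)) V) (rl j V) := by
    refine M_vcomp (B := bar W) (B' := bar W) (M_iff.2 ?_) (M_iff.2 (by simpa using hL))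
      (fun a => (a, false)) j ?_ ?_
    · have := L_bar hL
      simpa [hW] using this
    · apply rl_congr
      intro a ha
      simp only [lab_bar, List.mem_reverse] at ha
      simp [j, ha]
    · intro h₁ h₂ hh
      have hh := rl_inj hh
      refine ⟨fun z => if z.2 then h₂ z.1 else h₁ z.1, ?_, ?_⟩
      · intro a _; simp
      · intro a _
        by_cases ha : a ∈ lab W
        · have : h₁ a = h₂ a := hh a (by simpa using ha)
          simp [j, ha, this]
        · simp [j, ha]
  have hT := M_tensor (M_iff.2 hq) hQ
  have hP : M C (bar U) (X ++ V) := M_iff.2 (by simpa [hW] using hL)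
  let g₂' : β ⊕ (α × Bool) → γ ⊕ α := Sum.elim (fun y => Sum.inl (g₂ y))
    (fun z => if z.2 then Sum.inr z.1 else Sum.inl (g₁ z.1))
  have hcomp := M_vcomp hP hT (fun a => (Sum.inl (g₁ a) : γ ⊕ α)) g₂' (by
      have := congrArg (rl (Sum.inl : γ → γ ⊕ α)) hB
      simpa [tn, g₂'] using this) (by
      intro h₁ h₂ hh
      simp only [tn, rl_append, rl_rl] at hh
      obtain ⟨e1, e2⟩ := List.append_inj hh (by simpa using congrArg List.length hB)
      have e2 := rl_inj e2
      obtain ⟨k, hk1, hk2⟩ := hu _ _ e1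
      refine ⟨Sum.elim k (fun a => h₂ (Sum.inr (a, true))), ?_, ?_⟩
      · intro a ha
        exact hk1 a (by simp at ha; simp [ha])
      · intro z hz
        simp only [tn, lab_append, lab_rl, List.mem_append, List.mem_map] at hz
        rcases hz with ⟨y, hy, rfl⟩ | ⟨z, ⟨a, ha, rfl⟩, rfl⟩
        · exact hk2 y hy
        · by_cases haW : a ∈ lab W
          · have := hk1 a (by simp [ha])
            simp [g₂', j, haW, this, e2 a ha]
          · simp [g₂', j, haW])
  have hfin := M_iff.1 hcomp
  set w := bar (rl (fun a => (Sum.inl (g₁ a) : γ ⊕ α)) (bar U)) ++ rl g₂' (tn Y (rl j V)) with hw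
  have hlab : ∀ z ∈ lab w, (∃ x, z = Sum.inl x ∧
      ((∃ a ∈ lab (U ++ V), a ∈ lab W ∧ x = g₁ a) ∨ ∃ y ∈ lab Y, x = g₂ y)) ∨
      ∃ a ∈ lab V, a ∉ lab W ∧ z = Sum.inr a := by
    intro z hz
    simp only [hw, tn, rl_append, bar_rl, bar_bar, rl_rl, lab_append, lab_rl, List.mem_append,
      List.mem_map] at hz
    rcases hz with ⟨a, ha, rfl⟩ | ⟨y, hy, rfl⟩ | ⟨a, ha, rfl⟩
    · exact Or.inl ⟨_, rfl, Or.inl ⟨a, by simp [ha], by simp [hW, ha], rfl⟩⟩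
    · exact Or.inl ⟨_, rfl, Or.inr ⟨y, hy, rfl⟩⟩
    · by_cases haW : a ∈ lab W
      · exact Or.inl ⟨g₁ a, by simp [g₂', j, haW], Or.inl ⟨a, by simp [ha], haW, rfl⟩⟩
      · exact Or.inr ⟨a, ha, haW, by simp [g₂', j, haW]⟩
  have hsep : ∀ a ∈ lab V, a ∉ lab W → ∃ k : γ → Prop, (∀ a' ∈ lab (U ++ V), k (g₁ a') = (a' = a)) ∧
      (∀ y ∈ lab Y, k (g₂ y) = False) := by
    intro a ha haW
    refine hu (fun a' => a' = a) (fun _ => False) ?_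
    have h1 := congrArg (rl (fun _ => False)) hB
    simp only [rl_rl] at h1
    rw [← h1]
    apply rl_congr
    intro a' ha'
    refine eq_false ?_
    rintro rfl
    exact haW (by simp [hW, ha'])
  have htarget : rl g₁ U ++ rl g₂ Y ++ rl g₁ V = rl (Sum.elim id g₁) w := by
    simp only [hw, tn, rl_append, bar_rl, bar_bar, rl_rl, List.append_assoc]
    congr 2
    apply rl_congr
    intro a _
    by_cases haW : a ∈ lab W <;> simp [g₂', j, haW]
  rw [htarget]
  refine (L_rl ?_).2 hfin
  have hx : ∀ x, ((∃ a ∈ lab (U ++ V), a ∈ lab W ∧ x = g₁ a) ∨ ∃ y ∈ lab Y, x = g₂ y) →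
      ∀ a ∈ lab V, a ∉ lab W → x ≠ g₁ a := by
    rintro x hx a ha haW rfl
    obtain ⟨k, hk1, hk2⟩ := hsep a ha haW
    have e := hk1 a (by simp [ha])
    rcases hx with ⟨b, hb, hbW, hb'⟩ | ⟨y, hy, hy'⟩
    · have e' := hk1 b hb
      rw [← hb', e] at e'
      have : b = a := by simpa using e'
      exact haW (this ▸ hbW)
    · have e' := hk2 y hy
      rw [← hy', e] at e'
      simp at e'
  intro z hz z' hz' hzz
  rcases hlab z hz with ⟨x, rfl, hx1⟩ | ⟨a, ha, haW, rfl⟩ <;>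
    rcases hlab z' hz' with ⟨x', rfl, hx1'⟩ | ⟨a', ha', haW', rfl⟩
  · simpa using hzz
  · exact absurd (by simpa using hzz) (hx x hx1 a' ha' haW')
  · exact absurd (by simpa using hzz.symm) (hx x' hx1' a ha haW)
  · obtain ⟨k, hk1, hk2⟩ := hsep a ha haW
    have e := hk1 a (by simp [ha])
    have e' := hk1 a' (by simp [ha'])
    have hzz : g₁ a = g₁ a' := by simpa using hzz
    rw [← hzz, e] at e'
    have : a' = a := by simpa using e'
    rw [this]

end cat
section ops
variable {α β γ δ : Type} {C : PartitionCategory}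

@[simp] lemma rl_self (A : List (Bool × α)) : rl (fun a => a) A = A := rl_id' (fun _ _ => rfl)

/-- Words without common labels. -/
def Dj (A B : List (Bool × α)) : Prop := ∀ a ∈ lab A, a ∉ lab B

/-- All letters have color `c`. -/
def Col (c : Bool) (A : List (Bool × α)) : Prop := ∀ x ∈ A, x.1 = c

lemma L_nil : L C ([] : List (Bool × α)) := by
  have h0 : L C ([] : List (Bool × Unit)) := by
    have := L_sub (C := C) (U := []) (V := []) (X := [(false, ()), (true, ())])
      (X' := [(false, ()), (true, ())]) (Y := []) (id : Unit → Unit) id L_pair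
      (by simpa using L_bar (C := C) L_pair) rfl (fun h₁ h₂ _ => ⟨fun _ => True, by simp, by simp⟩)
    simpa using this
  have h1 : L C ([] : List (Bool × Empty)) :=
    (L_rl (f := fun _ => ()) (w := ([] : List (Bool × Empty))) (by simp)).1 h0
  exact (L_rl (f := fun z : Empty => (z.elim : α)) (w := ([] : List (Bool × Empty)))
    (by simp)).2 h1

lemma L_insert {u v : List (Bool × α)} {x : List (Bool × β)} (h : L C (u ++ v)) (hx : L C x) :
    L C (rl Sum.inl u ++ rl Sum.inr x ++ rl Sum.inl v) := by
  refine L_sub (X := []) (X' := []) Sum.inl Sum.inr (by simpa using h) (by simpa using hx) rfl ?_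
  intro h₁ h₂ _
  exact ⟨Sum.elim h₁ h₂, by simp, by simp⟩

lemma L_ins {u v x : List (Bool × α)} (h : L C (u ++ v)) (hx : L C x) (hd : Dj x (u ++ v)) :
    L C (u ++ x ++ v) := by
  have h1 := L_insert h hx
  have h2 : L C (rl (Sum.elim id id) (rl Sum.inl u ++ rl Sum.inr x ++ rl Sum.inl v)) := by
    refine (L_rl ?_).2 h1
    have key : ∀ y ∈ lab x, ∀ z, z ∈ lab u ∨ z ∈ lab v → y ≠ z := by
      rintro y hy z hz rfl
      exact hd y hy (by simpa using hz)
    intro y hy z hz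
    simp only [lab_append, lab_rl, List.mem_append, List.mem_map] at hy hz
    rcases hy with (⟨y, hy, rfl⟩ | ⟨y, hy, rfl⟩) | ⟨y, hy, rfl⟩ <;>
      rcases hz with (⟨z, hz, rfl⟩ | ⟨z, hz, rfl⟩) | ⟨z, hz, rfl⟩ <;>
      simp only [Sum.elim_inl, Sum.elim_inr, id] <;> intro e
    · rw [e]
    · exact absurd e.symm (key z hz y (Or.inl hy))
    · rw [e]
    · exact absurd e (key y hy z (Or.inl hz))
    · rw [e]
    · exact absurd e (key y hy z (Or.inr hz))
    · rw [e]
    · exact absurd e.symm (key z hz y (Or.inr hy))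
    · rw [e]
  simpa using h2

lemma L_append {u v : List (Bool × α)} (h : L C u) (hv : L C v) (hd : Dj u v) :
    L C (u ++ v) := by
  have := L_ins (u := []) (v := v) (x := u) hv h (by simpa using hd)
  simpa using this

lemma L_id {c : Bool} (hc : L C [(!c, ()), (c, ())]) (Z : List (Bool × α)) (hZ : Col c Z)
    (hn : (lab Z).Nodup) : L C (bar Z ++ Z) := by
  induction Z with
  | nil => simpa using L_nil
  | cons x Z ih =>
    obtain ⟨cx, a⟩ := x
    have hcx : cx = c := hZ (cx, a) (by simp)
    subst hcx
    simp only [lab_cons, List.nodup_cons] at hn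
    have h1 := ih (fun y hy => hZ y (by simp [hy])) hn.2
    have h2 : L C [(!cx, a), (cx, a)] := by
      have := (L_rl (C := C) (f := fun _ : Unit => a) (w := [(!cx, ()), (cx, ())])
        (fun _ _ _ _ _ => rfl)).2 hc
      simpa using this
    have := L_ins h1 h2 (by
      intro b hb
      simp at hb
      subst hb
      simp [hn.1])
    simpa using this

lemma L_idw (Z : List (Bool × α)) (hZ : Col true Z) (hn : (lab Z).Nodup) : L C (bar Z ++ Z) :=
  L_id (by simpa using L_pair) Z hZ hn

lemma exists_idw (X : List (Bool × α)) (c : Bool) (hX : Col c X) :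
    ∃ (n : ℕ) (Z : List (Bool × Fin n)) (e : Fin n → α), Col c Z ∧ (lab Z).Nodup ∧ rl e Z = X := by
  refine ⟨X.length, (List.finRange X.length).map (fun i => (c, i)), fun i => (X.get i).2,
    ?_, ?_, ?_⟩
  · intro x hx
    simp only [List.mem_map] at hx
    obtain ⟨i, _, rfl⟩ := hx
    rfl
  · have : lab ((List.finRange X.length).map (fun i => (c, i))) = List.finRange X.length := by
      simp [lab, Function.comp_def]
    rw [this]
    exact List.nodup_finRange _
  · apply List.ext_getElem
    · simp [rl]
    · intro i hi hi'
      simp [rl]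
      have := hX (X[i]) (List.getElem_mem _)
      exact Prod.ext this.symm rfl

lemma rl_col {f : α → β} {c : Bool} {A : List (Bool × α)} (h : Col c A) : Col c (rl f A) := by
  intro x hx
  simp only [rl, List.mem_map] at hx
  obtain ⟨y, hy, rfl⟩ := hx
  exact h y hy

lemma bar_col {c : Bool} {A : List (Bool × α)} (h : Col c A) : Col (!c) (bar A) := by
  intro x hx
  simp only [bar, List.mem_reverse, List.mem_map] at hx
  obtain ⟨y, hy, rfl⟩ := hx
  simp [h y hy]

lemma bar_inj {A B : List (Bool × α)} (h : bar A = bar B) : A = B := by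
  have := congrArg bar h
  simpa using this

lemma L_capMany {u v X₁ X₂ : List (Bool × α)} (g : α → γ) (h : L C (u ++ (bar X₁ ++ X₂) ++ v))
    (h1 : Col true X₁) (hg : rl g X₁ = rl g X₂)
    (hu : ∀ h : α → Prop, rl h X₁ = rl h X₂ →
      ∃ k : γ → Prop, ∀ a ∈ lab (u ++ v), k (g a) = h a) :
    L C (rl g u ++ rl g v) := by
  obtain ⟨n, Z, e, hZ, hn, he⟩ := exists_idw X₁ true h1
  have hz := L_idw (C := C) Z hZ hn
  have := L_sub (X := bar X₁ ++ X₂) (X' := bar Z ++ Z) (Y := []) g (fun i => g (e i)) h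
    (by simpa using hz) (by
      have e1 : rl (fun i => g (e i)) Z = rl g X₁ := by rw [← he]; simp
      rw [rl_append, rl_append, ← bar_rl, ← bar_rl, e1, hg]) (by
      intro h₁ h₂ hh
      rw [rl_append, rl_append, ← bar_rl, ← bar_rl] at hh
      have hlen : X₁.length = Z.length := by rw [← he]; simp
      obtain ⟨e1, e2⟩ := List.append_inj hh (by simp [hlen])
      have e1 := bar_inj e1
      obtain ⟨k, hk⟩ := hu h₁ (e1.trans e2.symm)
      exact ⟨k, hk, by simp⟩)
  simpa using this

lemma col_rl_eq {c : Bool} {X : List (Bool × α)} {Y : List (Bool × β)} (hX : Col c X)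
    (hY : Col c Y)
    (hlen : X.length = Y.length) (z : γ) : rl (fun _ => z) X = rl (fun _ => z) Y := by
  have : ∀ {ε : Type} (X : List (Bool × ε)), Col c X →
      rl (fun _ => z) X = List.replicate X.length (c, z) := by
    intro ε X hX
    rw [List.eq_replicate_iff]
    refine ⟨by simp, ?_⟩
    intro b hb
    simp only [rl, List.mem_map] at hb
    obtain ⟨y, hy, rfl⟩ := hb
    rw [hX y hy]
  rw [this X hX, this Y hY, hlen]

lemma L_capDisj {u v X₁ X₂ : List (Bool × α)} (h : L C (u ++ (bar X₁ ++ X₂) ++ v))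
    (h1 : Col true X₁) (h2 : Col true X₂) (hlen : X₁.length = X₂.length)
    (hd : Dj (u ++ v) (X₁ ++ X₂)) : L C (u ++ v) := by
  let g : α → Option α := fun a => if a ∈ lab (X₁ ++ X₂) then none else some a
  have hn : ∀ X, (∀ a ∈ lab X, a ∈ lab (X₁ ++ X₂)) → rl g X = rl (fun _ => none) X := by
    intro X hX
    apply rl_congr
    intro a ha
    have := hX a ha
    simp only [g, if_pos this]
  have hg : ∀ a ∈ lab (u ++ v), g a = some a := by
    intro a ha
    have := hd a ha
    simp only [g, if_neg this]
  have := L_capMany g h h1 (by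
    rw [hn X₁ (fun a ha => by simp [ha]), hn X₂ (fun a ha => by simp [ha])]
    exact col_rl_eq h1 h2 hlen _) (by
    intro h _
    refine ⟨fun z => z.elim False h, ?_⟩
    intro a ha
    rw [hg a ha]
    rfl)
  rw [← rl_append, rl_congr hg] at this
  exact (L_rl' (Option.some_injective _)).1 this

/-- White letters can be moved from the left end to the right end. -/
lemma L_cyc {x w : List (Bool × α)} (hx : Col true x) (h : L C (x ++ w)) : L C (w ++ x) := by
  obtain ⟨n, Z, e, hZ, hn, he⟩ := exists_idw x true hx
  have hz := L_idw (C := C) Z hZ hn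
  have h1 := L_insert hz h
  rw [← bar_rl] at h1
  have := L_capMany (u := []) (X₁ := rl Sum.inl Z) (X₂ := rl Sum.inr x)
    (v := rl Sum.inr w ++ rl Sum.inl Z) (Sum.elim e id) (by simpa using h1)
    (rl_col hZ) (by simp [he]) (by
      intro h hh
      rw [← he] at hh
      simp only [rl_rl] at hh
      have hh := rl_inj hh
      refine ⟨fun a => h (Sum.inr a), ?_⟩
      intro a ha
      rcases a with i | a
      · simp only [Sum.elim_inl]
        refine (hh i ?_).symm
        simpa using ha
      · simp)
  simpa [he] using this

/-- Black letters can be moved from the right end to the left end. -/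
lemma L_cyc' {x w : List (Bool × α)} (hx : Col false x) (h : L C (w ++ x)) : L C (x ++ w) := by
  have h1 := L_bar h
  rw [bar_append] at h1
  have h2 := L_bar (L_cyc (bar_col hx) h1)
  simpa using h2

lemma L_rightTrace {R₁ R₂ w : List (Bool × α)} (h : L C (bar R₁ ++ w ++ R₂)) (h1 : Col false R₁)
    (h2 : Col false R₂) (hlen : R₁.length = R₂.length) (hd : Dj w (R₁ ++ R₂)) : L C w := by
  have h3 := L_cyc (bar_col h1) (by simpa using h)
  have := L_capDisj (u := w) (v := []) (X₁ := bar R₂) (X₂ := bar R₁) (by simpa using h3)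
    (bar_col h2) (bar_col h1) (by simp [hlen]) (by
      intro a ha
      have := hd a (by simpa using ha)
      simp at this ⊢
      tauto)
  simpa using this

/-- Noncrossing condition. -/
lemma L_nc (hnc : ∀ p ∈ C.mem, p.NonCrossing) {w : List (Bool × α)} (h : L C w)
    {c₁ c₂ c₃ c₄ : Bool} {a x : α} (hs : [(c₁, a), (c₂, x), (c₃, a), (c₄, x)].Sublist w) :
    a = x := by
  obtain ⟨f, hf⟩ := List.sublist_iff_exists_fin_orderEmbedding_get_eq.1 hs
  have h0 := hnc _ h (Sum.inr (f 3)) (Sum.inr (f 2)) (Sum.inr (f 1)) (Sum.inr (f 0))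
  have lt : ∀ i j, f i < f j → (Part [] w).ptIdx (Sum.inr (f j)) < (Part [] w).ptIdx (Sum.inr (f i)) := by
    intro i j hij
    have hj : (f j).1 < w.length := (f j).2
    have hij : (f i).1 < (f j).1 := hij
    change 0 + (w.length - 1 - (f j).1) < 0 + (w.length - 1 - (f i).1)
    omega
  have hlt : ∀ i j : Fin 4, i < j → f i < f j := fun i j hij => f.lt_iff_lt.2 hij
  have g : ∀ i, (w.get (f i)).2 = (([(c₁, a), (c₂, x), (c₃, a), (c₄, x)] : List (Bool × α)).get i).2 :=
    fun i => congrArg Prod.snd (hf i).symm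
  have h1 := h0 (lt _ _ (hlt 2 3 (by decide))) (lt _ _ (hlt 1 2 (by decide)))
    (lt _ _ (hlt 0 1 (by decide))) ((g 3).trans (g 1).symm) ((g 2).trans (g 0).symm)
  exact ((g 2).symm.trans (Eq.symm h1)).trans (g 3)

end ops
section eqv
variable {α β γ δ : Type} {α' β' : Type} {C : PartitionCategory}

/-- Injectivity on labels. -/
def Inj (f : α → β) (A : List (Bool × α)) : Prop :=
  ∀ x ∈ lab A, ∀ y ∈ lab A, f x = f y → x = y

/-- The word `A` on top of the word `B`, without common blocks, lies in `C`. -/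
def E (C : PartitionCategory) (A : List (Bool × α)) (B : List (Bool × β)) : Prop :=
  L C (bar (rl Sum.inl A) ++ rl Sum.inr B)

/-- The word `A` on top of itself, without common blocks, lies in `C`. -/
abbrev D (C : PartitionCategory) (A : List (Bool × α)) : Prop := E C A A

lemma E_rl {A : List (Bool × α)} {B : List (Bool × β)} {f : β → γ} (hf : Inj f B) :
    E C A (rl f B) ↔ E C A B := by
  have : bar (rl Sum.inl A) ++ rl Sum.inr (rl f B) =
      rl (Sum.map id f) (bar (rl Sum.inl A) ++ rl Sum.inr B) := by
    simp [bar_rl]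
  unfold E
  rw [this, L_rl]
  intro x hx y hy
  simp only [lab_append, lab_rl, lab_bar, List.mem_append, List.mem_map, List.mem_reverse] at hx hy
  rcases hx with ⟨a, ha, rfl⟩ | ⟨a, ha, rfl⟩ <;> rcases hy with ⟨b, hb, rfl⟩ | ⟨b, hb, rfl⟩
  · simp
  · simp
  · simp
  · simp only [Sum.map_inr, Sum.inr.injEq]
    exact hf a ha b hb

lemma E_symm {A : List (Bool × α)} {B : List (Bool × β)} (h : E C A B) : E C B A := by
  have h1 := L_bar h
  have h2 := (L_rl' (C := C) (Equiv.sumComm α β).injective).2 h1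
  unfold E
  simpa [bar_rl] using h2

lemma E_rl_left {A : List (Bool × α)} {B : List (Bool × β)} {f : α → γ} (hf : Inj f A) :
    E C (rl f A) B ↔ E C A B :=
  ⟨fun h => E_symm ((E_rl hf).1 (E_symm h)), fun h => E_symm ((E_rl hf).2 (E_symm h))⟩

lemma E_trans {A : List (Bool × α)} {B : List (Bool × β)} {G : List (Bool × γ)} (h : E C A B)
    (h' : E C B G) : E C A G := by
  have := L_sub (C := C) (U := bar (rl Sum.inl A)) (X := rl Sum.inr B) (V := [])
    (X' := rl Sum.inl B) (Y := rl Sum.inr G)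
    (Sum.elim (fun a => some (Sum.inl a)) (fun _ => none) : α ⊕ β → Option (α ⊕ γ))
    (Sum.elim (fun _ => none) (fun a => some (Sum.inr a)))
    (by simpa [E] using h) h' (by simp) (by
      intro h₁ h₂ _
      refine ⟨fun z => z.elim False (Sum.elim (fun a => h₁ (Sum.inl a)) (fun a => h₂ (Sum.inr a))),
        ?_, ?_⟩
      · intro a ha
        simp at ha
        obtain ⟨b, _, rfl⟩ := ha
        simp
      · intro a ha
        simp at ha
        obtain ⟨b, _, rfl⟩ := ha
        simp)
  refine (L_rl' (Option.some_injective (α ⊕ γ))).1 ?_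
  simpa [bar_rl] using this

lemma E_nil : E C ([] : List (Bool × α)) ([] : List (Bool × β)) := L_nil

lemma E_nil_iff {B : List (Bool × β)} : E C ([] : List (Bool × α)) B ↔ L C B := by
  unfold E
  simp only [rl_nil, bar_nil, List.nil_append]
  exact L_rl' Sum.inr_injective

lemma E_tensor {A : List (Bool × α)} {B : List (Bool × β)} {A' : List (Bool × α')}
    {B' : List (Bool × β')} (h : E C A B) (h' : E C A' B') : E C (tn A A') (tn B B') := by
  have h1 := M_iff.1 (M_tensor (M_iff.2 h) (M_iff.2 h'))
  have h2 := (L_rl' (C := C) (Equiv.sumSumSumComm α β α' β').injective).2 h1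
  unfold E
  simpa [bar_rl, tn] using h2

lemma tn_append {A B : List (Bool × α)} (h : Dj A B) :
    A ++ B = rl (Sum.elim id id) (tn A B) ∧ Inj (Sum.elim id id) (tn A B) := by
  refine ⟨by simp [tn], ?_⟩
  intro x hx y hy
  simp only [tn, lab_append, lab_rl, List.mem_append, List.mem_map] at hx hy
  rcases hx with ⟨a, ha, rfl⟩ | ⟨a, ha, rfl⟩ <;> rcases hy with ⟨b, hb, rfl⟩ | ⟨b, hb, rfl⟩ <;>
    simp only [Sum.elim_inl, Sum.elim_inr, id] <;> intro e
  · rw [e]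
  · exact absurd hb (h b (e ▸ ha))
  · exact absurd ha (h a (e ▸ hb))
  · rw [e]

lemma E_append {A A' : List (Bool × α)} {B B' : List (Bool × β)} (h : E C A B) (h' : E C A' B')
    (hA : Dj A A') (hB : Dj B B') : E C (A ++ A') (B ++ B') := by
  rw [(tn_append hA).1, (tn_append hB).1, E_rl_left (tn_append hA).2, E_rl (tn_append hB).2]
  exact E_tensor h h'

lemma E_left {A : List (Bool × α)} {B : List (Bool × β)} (h : E C A B) : D C A :=
  E_trans h (E_symm h)

lemma E_right {A : List (Bool × α)} {B : List (Bool × β)} (h : E C A B) : D C B :=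
  E_trans (E_symm h) h

lemma E_bar {A : List (Bool × α)} {B : List (Bool × β)} : E C A B ↔ L C (tn (bar A) B) := by
  unfold E tn
  rw [bar_rl]

/-- Pushouts of words. -/
def Push (X : List (Bool × α)) (X' : List (Bool × β)) (g₁ : α → γ) (g₂ : β → γ) : Prop :=
  rl g₁ X = rl g₂ X' ∧ ∀ (h₁ : α → Prop) (h₂ : β → Prop), rl h₁ X = rl h₂ X' →
    ∃ k : γ → Prop, (∀ a, k (g₁ a) = h₁ a) ∧ (∀ b, k (g₂ b) = h₂ b)

lemma rl_zip {f : α → γ} {g : β → γ} {X : List (Bool × α)} {X' : List (Bool × β)}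
    (h : rl f X = rl g X') : ∀ p ∈ (lab X).zip (lab X'), f p.1 = g p.2 := by
  induction X generalizing X' with
  | nil => simp
  | cons x X ih =>
    cases X' with
    | nil => simp
    | cons x' X' =>
      simp only [rl_cons, List.cons.injEq, Prod.mk.injEq] at h
      intro p hp
      simp only [lab_cons, List.zip_cons_cons, List.mem_cons] at hp
      rcases hp with rfl | hp
      · exact h.1.2
      · exact ih h.2 p hp

lemma rl_of_zip {f : α → γ} {g : β → γ} {X : List (Bool × α)} {X' : List (Bool × β)}
    (hc : X.map Prod.fst = X'.map Prod.fst)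
    (h : ∀ p ∈ (lab X).zip (lab X'), f p.1 = g p.2) : rl f X = rl g X' := by
  induction X generalizing X' with
  | nil =>
    cases X' with
    | nil => rfl
    | cons x' X' => simp at hc
  | cons x X ih =>
    cases X' with
    | nil => simp at hc
    | cons x' X' =>
      simp only [List.map_cons, List.cons.injEq] at hc
      simp only [lab_cons, List.zip_cons_cons, List.mem_cons] at h
      simp only [rl_cons, List.cons.injEq, Prod.mk.injEq]
      exact ⟨⟨hc.1, h (x.2, x'.2) (Or.inl rfl)⟩, ih hc.2 (fun p hp => h p (Or.inr hp))⟩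

lemma exists_push (X : List (Bool × α)) (X' : List (Bool × β))
    (hc : X.map Prod.fst = X'.map Prod.fst) :
    ∃ (γ : Type) (g₁ : α → γ) (g₂ : β → γ), Push X X' g₁ g₂ := by
  let r : α ⊕ β → α ⊕ β → Prop := fun x y => ∃ p ∈ (lab X).zip (lab X'),
    x = Sum.inl p.1 ∧ y = Sum.inr p.2
  refine ⟨Quot r, fun a => Quot.mk r (Sum.inl a), fun a => Quot.mk r (Sum.inr a), ?_, ?_⟩
  · refine rl_of_zip hc ?_
    intro p hp
    exact Quot.sound ⟨p, hp, rfl, rfl⟩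
  · intro h₁ h₂ hh
    have hz := rl_zip hh
    refine ⟨Quot.lift (Sum.elim h₁ h₂) ?_, fun _ => rfl, fun _ => rfl⟩
    rintro x y ⟨p, hp, rfl, rfl⟩
    exact hz p hp

lemma E_sub {A : List (Bool × δ)} {U X V : List (Bool × α)} {X' Y : List (Bool × β)} {g₁ : α → γ}
    {g₂ : β → γ} (h : E C A (U ++ X ++ V)) (hq : L C (bar X' ++ Y)) (hp : Push X X' g₁ g₂) :
    E C A (rl g₁ U ++ rl g₂ Y ++ rl g₁ V) := by
  have := L_sub (C := C) (U := bar (rl Sum.inl A) ++ rl Sum.inr U) (X := rl Sum.inr X)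
    (V := rl Sum.inr V) (X' := X') (Y := Y) (Sum.map id g₁ : δ ⊕ α → δ ⊕ γ)
    (fun b => Sum.inr (g₂ b)) (by simpa [E] using h) hq (by
      have := congrArg (rl (Sum.inr : γ → δ ⊕ γ)) hp.1
      simpa using this) (by
      intro h₁ h₂ hh
      rw [rl_rl] at hh
      obtain ⟨k, hk1, hk2⟩ := hp.2 _ _ hh
      refine ⟨Sum.elim (fun a => h₁ (Sum.inl a)) k, ?_, fun b _ => hk2 b⟩
      rintro (a | a) _
      · rfl
      · exact hk1 a)
  unfold E
  simpa [bar_rl] using this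

/-- Capping adjacent words inside an equivalence. -/
lemma E_cap {A : List (Bool × δ)} {U X₁ X₂ V : List (Bool × α)}
    (h : E C A (U ++ (bar X₁ ++ X₂) ++ V)) (h1 : Col true X₁) (h2 : Col true X₂)
    (hlen : X₁.length = X₂.length) :
    ∃ (γ : Type) (g : α → γ), E C A (rl g (U ++ V)) := by
  obtain ⟨n, Z, e, hZ, hn, he⟩ := exists_idw X₁ true h1
  have hz := L_idw (C := C) Z hZ hn
  have cZ : ∀ {ε : Type} (X : List (Bool × ε)) (c : Bool), Col c X →
      X.map Prod.fst = List.replicate X.length c := by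
    intro ε X c hX
    rw [List.eq_replicate_iff]
    refine ⟨by simp, ?_⟩
    intro b hb
    simp only [List.mem_map] at hb
    obtain ⟨y, hy, rfl⟩ := hb
    exact hX y hy
  have hlZ : Z.length = X₁.length := by rw [← he]; simp
  obtain ⟨γ, g₁, g₂, hp⟩ := exists_push (bar X₁ ++ X₂) (bar Z ++ Z) (by
    rw [List.map_append, List.map_append, cZ _ _ (bar_col h1), cZ _ _ (bar_col hZ), cZ _ _ h2,
      cZ _ _ hZ, ← hlen, hlZ, bar_length, bar_length, hlZ])
  have := E_sub (Y := []) h (by simpa using hz) hp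
  exact ⟨γ, g₁, by simpa using this⟩

/-- Left trace. -/
lemma L_traceLeft {B₁ B₂ : List (Bool × α)} (h : D C (B₁ ++ B₂)) (h1 : Col true B₁) :
    L C (bar (rl (fun a => (a, false)) B₂) ++ rl (fun a => (a, decide (a ∉ lab B₁))) B₂) := by
  have := L_capMany (C := C) (u := bar (rl Sum.inl B₂)) (X₁ := rl Sum.inl B₁)
    (X₂ := rl Sum.inr B₁) (v := rl Sum.inr B₂)
    (Sum.elim (fun a => (a, false)) (fun a => (a, decide (a ∉ lab B₁))) : α ⊕ α → α × Bool)
    (by simpa [D, E] using h) (rl_col h1) (by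
      simp only [rl_rl, Sum.elim_inl, Sum.elim_inr]
      apply rl_congr
      intro a ha
      simp [ha]) (by
      intro h hh
      simp only [rl_rl] at hh
      have hh := rl_inj hh
      refine ⟨fun z => if z.2 then h (Sum.inr z.1) else h (Sum.inl z.1), ?_⟩
      rintro (a | a) _
      · simp
      · by_cases ha : a ∈ lab B₁
        · simp [ha, hh a ha]
        · simp [ha])
  simpa [bar_rl] using this

lemma D_traceLeft {B₁ B₂ : List (Bool × α)} (h : D C (B₁ ++ B₂)) (h1 : Col true B₁)
    (hd : Dj B₁ B₂) : D C B₂ := by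
  have := L_capDisj (C := C) (u := bar (rl Sum.inl B₂)) (X₁ := rl Sum.inl B₁)
    (X₂ := rl Sum.inr B₁) (v := rl Sum.inr B₂) (by simpa [D, E] using h) (rl_col h1) (rl_col h1)
    (by simp) (by
      intro a ha
      simp only [lab_append, lab_bar, lab_rl, List.mem_append, List.mem_reverse,
        List.mem_map] at ha ⊢
      rcases ha with ⟨a, ha, rfl⟩ | ⟨a, ha, rfl⟩
      · rintro (⟨b, hb, e⟩ | ⟨b, hb, e⟩)
        · cases e; exact hd _ hb ha
        · cases e
      · rintro (⟨b, hb, e⟩ | ⟨b, hb, e⟩)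
        · cases e
        · cases e; exact hd _ hb ha)
  exact this

end eqv
section white
variable {α β γ δ : Type} {C : PartitionCategory}

lemma col_fst {c : Bool} {X : List (Bool × α)} (hX : Col c X) :
    X.map Prod.fst = List.replicate X.length c := by
  rw [List.eq_replicate_iff]
  refine ⟨by simp, ?_⟩
  intro b hb
  simp only [List.mem_map] at hb
  obtain ⟨y, hy, rfl⟩ := hb
  exact hX y hy

lemma col_fst_eq {c : Bool} {X : List (Bool × α)} {Y : List (Bool × β)} (hX : Col c X)
    (hY : Col c Y) (h : X.length = Y.length) : X.map Prod.fst = Y.map Prod.fst := by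
  rw [col_fst hX, col_fst hY, h]

lemma col_append {c : Bool} {X Y : List (Bool × α)} :
    Col c (X ++ Y) ↔ Col c X ∧ Col c Y := by
  unfold Col
  simp only [List.mem_append]
  exact ⟨fun h => ⟨fun x hx => h x (Or.inl hx), fun x hx => h x (Or.inr hx)⟩,
    fun h x hx => hx.elim (h.1 x) (h.2 x)⟩

lemma col_replicate {c : Bool} {n : ℕ} {a : α} : Col c (List.replicate n (c, a)) := by
  intro x hx
  rw [(List.mem_replicate.1 hx).2]

/-- The one-block word. -/
def th (n : ℕ) (c : Bool) : List (Bool × Unit) := List.replicate n (c, ())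

lemma th_col {n : ℕ} {c : Bool} : Col c (th n c) := col_replicate

@[simp] lemma th_length {n : ℕ} {c : Bool} : (th n c).length = n := by simp [th]

lemma bar_th {n : ℕ} {c : Bool} : bar (th n c) = th n (!c) := by simp [bar, th]

lemma rl_th {n : ℕ} {c : Bool} (f : Unit → α) : rl f (th n c) = List.replicate n (c, f ()) := by
  simp [rl, th]

lemma betaP_eq (n : ℕ) (c : Bool) :
    betaP n c = Part (rl Sum.inl (th n c)) (rl Sum.inr (th n c)) := by
  refine part_of _ _ _ (Sum.map (fun _ => ()) (fun _ => ())) (by simp [betaP])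
    (by simp [betaP]) ?_ ?_ ?_
  · intro i
    have : i.1 < n := i.2
    rw [rl_th, List.getElem?_replicate, if_pos this]
    rfl
  · intro i
    have : i.1 < n := i.2
    rw [rl_th, List.getElem?_replicate, if_pos this]
    rfl
  · intro x y
    change Sum.LiftRel (⊤ : Setoid (Fin n)).r (⊤ : Setoid (Fin n)).r x y ↔ _
    rcases x with x | x <;> rcases y with y | y
    · exact ⟨fun _ => rfl, fun _ => Sum.LiftRel.inl trivial⟩
    · exact ⟨fun h => (by cases h), fun h => (by cases h)⟩
    · exact ⟨fun h => (by cases h), fun h => (by cases h)⟩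
    · exact ⟨fun _ => rfl, fun _ => Sum.LiftRel.inr trivial⟩

lemma beta_iff {n : ℕ} {c : Bool} : betaP n c ∈ C.mem ↔ D C (th n c) := by
  rw [betaP_eq]
  exact M_iff

lemma col_rl_th {c : Bool} {B : List (Bool × α)} (hB : Col c B) :
    rl (fun _ => ()) B = th B.length c := by
  have := col_rl_eq hB (th_col (n := B.length) (c := c)) (by simp) ()
  rw [this]
  simp [th]

/-- All labels agree. -/
def One (B : List (Bool × α)) : Prop := ∀ a ∈ lab B, ∀ b ∈ lab B, a = b

lemma one_inj {B : List (Bool × α)} (h : One B) : Inj (fun _ => ()) B :=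
  fun a ha b hb _ => h a ha b hb

lemma one_beta {c : Bool} {B : List (Bool × α)} (h : One B) (hB : Col c B) (hD : D C B) :
    betaP B.length c ∈ C.mem := by
  rw [beta_iff, ← col_rl_th hB]
  exact (E_rl (one_inj h)).2 ((E_rl_left (one_inj h)).2 hD)

lemma split_last (p : α → Prop) (B : List α) :
    ∃ R S, B = R ++ S ∧ (∀ x ∈ S, p x) ∧ (R = [] ∨ ∃ R' y, R = R' ++ [y] ∧ ¬ p y) := by
  induction B using List.reverseRecOn with
  | nil => exact ⟨[], [], rfl, by simp, Or.inl rfl⟩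
  | append_singleton B y ih =>
    by_cases hy : p y
    · obtain ⟨R, S, rfl, hS, hR⟩ := ih
      refine ⟨R, S ++ [y], by simp, ?_, hR⟩
      intro x hx
      simp only [List.mem_append, List.mem_singleton] at hx
      rcases hx with hx | rfl
      · exact hS x hx
      · exact hy
    · exact ⟨B ++ [y], [], by simp, by simp, Or.inr ⟨B, y, rfl, hy⟩⟩

lemma mem_lab_sub {a : α} {A : List (Bool × α)} (h : a ∈ lab A) : ∃ c, [(c, a)].Sublist A := by
  simp only [lab, List.mem_map] at h
  obtain ⟨⟨c, a'⟩, h, rfl⟩ := h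
  exact ⟨c, List.singleton_sublist.2 h⟩

lemma D_nc (hnc : ∀ p ∈ C.mem, p.NonCrossing) {B : List (Bool × α)} (h : D C B)
    {c₁ c₂ c₃ c₄ : Bool} {a x : α} (hs : [(c₁, a), (c₂, x), (c₃, a), (c₄, x)].Sublist B) :
    a = x := by
  have h1 : ([(c₁, Sum.inr a), (c₂, Sum.inr x), (c₃, Sum.inr a), (c₄, Sum.inr x)] :
      List (Bool × (α ⊕ α))).Sublist (bar (rl Sum.inl B) ++ rl Sum.inr B) := by
    refine List.Sublist.trans ?_ (List.sublist_append_right _ _)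
    exact hs.map (fun x : Bool × α => (x.1, (Sum.inr x.2 : α ⊕ α)))
  exact Sum.inr_injective (L_nc hnc h h1)

lemma lemK (hnc : ∀ p ∈ C.mem, p.NonCrossing) (n : ℕ)
    (hno : ∀ {α : Type} (B : List (Bool × α)), Col true B → D C B → 1 ≤ B.length → n ≤ B.length)
    (B : List (Bool × α)) (hB : Col true B) (hD : D C B) (hlen : B.length = n) : One B := by
  by_contra hone
  have hone' : ∃ a ∈ lab B, ∃ b ∈ lab B, a ≠ b := by
    unfold One at hone
    push Not at hone
    exact hone
  obtain ⟨a₀, ha₀, b₀, hb₀, hab⟩ := hone'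
  have hBne : B ≠ [] := by rintro rfl; simp at ha₀
  obtain ⟨B₀, z, rfl⟩ : ∃ B₀ z, B = B₀ ++ [z] :=
    ⟨B.dropLast, B.getLast hBne, (List.dropLast_append_getLast hBne).symm⟩
  obtain ⟨R, S, hRS, hS, hR⟩ := split_last (fun x : Bool × α => x.2 = z.2) (B₀ ++ [z])
  have hSne : S ≠ [] := by
    rintro rfl
    rcases hR with rfl | ⟨R', y, rfl, hy⟩
    · simp at hRS
    · simp only [List.append_nil] at hRS
      have := (List.append_inj' hRS rfl).2
      simp only [List.cons.injEq, and_true] at this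
      exact hy (by rw [this])
  obtain ⟨R', y, hR', hy⟩ : ∃ R' y, R = R' ++ [y] ∧ ¬ y.2 = z.2 := by
    rcases hR with rfl | h
    · exfalso
      have : ∀ a ∈ lab (B₀ ++ [z]), a = z.2 := by
        rw [hRS]
        intro a ha
        simp only [lab, List.nil_append, List.mem_map] at ha
        obtain ⟨x, hx, rfl⟩ := ha
        exact hS x hx
      exact hab ((this a₀ ha₀).trans (this b₀ hb₀).symm)
    · exact h
  obtain ⟨P, G, hPG, hG, hP⟩ := split_last (fun x : Bool × α => ¬ x.2 = z.2) R
  have hGne : G ≠ [] := by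
    rintro rfl
    rcases hP with rfl | ⟨P', y', rfl, hy'⟩
    · rw [hR'] at hPG
      simp at hPG
    · rw [hR', List.append_nil] at hPG
      have := (List.append_inj' hPG rfl).2
      simp only [List.cons.injEq, and_true] at this
      exact hy' (by rw [← this]; exact hy)
  have hBe : B₀ ++ [z] = P ++ (G ++ S) := by rw [hRS, hPG, List.append_assoc]
  rw [hBe] at hB hD hlen
  clear hBne ha₀ hb₀ hone hRS
  have hlS : ∀ a ∈ lab S, a = z.2 := by
    intro a ha
    simp only [lab, List.mem_map] at ha
    obtain ⟨x, hx, rfl⟩ := ha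
    exact hS x hx
  have hlG : ∀ a ∈ lab G, a ≠ z.2 := by
    intro a ha
    simp only [lab, List.mem_map] at ha
    obtain ⟨x, hx, rfl⟩ := ha
    exact hG x hx
  have hvS : z.2 ∈ lab S := by
    cases S with
    | nil => exact absurd rfl hSne
    | cons s S =>
      have : s.2 = z.2 := hS s (by simp)
      simp [this]
  have hdPG : ∀ a ∈ lab G, a ∉ lab P := by
    intro a haG haP
    rcases hP with rfl | ⟨P', y', rfl, hy'⟩
    · simp at haP
    · have hy' : y'.2 = z.2 := not_not.1 hy'
      have haP' : a ∈ lab P' := by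
        simp only [lab_append, lab_cons, lab_nil, List.mem_append, List.mem_singleton] at haP
        rcases haP with h | h
        · exact h
        · exact absurd (h.trans hy') (hlG a haG)
      obtain ⟨c₁, s₁⟩ := mem_lab_sub haP'
      obtain ⟨c₃, s₃⟩ := mem_lab_sub haG
      obtain ⟨c₄, s₄⟩ := mem_lab_sub hvS
      have s₂ : [(y'.1, z.2)].Sublist [y'] := by rw [← hy']
      have := (s₁.append s₂).append (s₃.append s₄)
      exact hlG a haG (D_nc hnc hD this)
  rw [col_append, col_append] at hB
  obtain ⟨hBP, hBG, hBS⟩ := hB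
  have hq := L_traceLeft hD hBP
  have hlen' : P.length + (G.length + S.length) = n := by simpa using hlen
  have hGl : 1 ≤ G.length := List.length_pos_iff.2 hGne
  have hSl : 1 ≤ S.length := List.length_pos_iff.2 hSne
  set W := P ++ (G ++ S) with hW
  have hWc : Col true W := by rw [hW, col_append, col_append]; exact ⟨hBP, hBG, hBS⟩
  obtain ⟨X, V, hXV, hXl⟩ : ∃ X V, W = X ++ V ∧ X.length = (G ++ S).length :=
    ⟨W.take (G ++ S).length, W.drop (G ++ S).length, (List.take_append_drop _ _).symm, by
      simp [hW]⟩
  have hXc : Col true X ∧ Col true V := by rw [← col_append, ← hXV]; exact hWc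
  obtain ⟨γ, g₁, g₂, hp⟩ := exists_push X (rl (fun a => (a, false)) (G ++ S))
    (col_fst_eq hXc.1 (rl_col (col_append.2 ⟨hBG, hBS⟩)) (by simpa using hXl))
  have hE : E C W ([] ++ X ++ V) := by
    have : W = [] ++ X ++ V := by simpa using hXV
    exact this ▸ hD
  have h1 := E_right (E_sub hE hq hp)
  set j : α → α × Bool := fun a => (a, decide (a ∉ lab P)) with hj
  have h2 := D_traceLeft (B₁ := rl g₂ (rl j G)) (B₂ := rl g₂ (rl j S) ++ rl g₁ V)
    (by simpa using h1) (rl_col (rl_col hBG)) (by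
      intro x hx hx'
      simp only [rl_rl, lab_append, lab_rl, List.mem_append, List.mem_map] at hx hx'
      obtain ⟨a, ha, rfl⟩ := hx
      have hja : j a = (a, true) := by simp [hj, hdPG a ha]
      obtain ⟨k, hk1, hk2⟩ := hp.2 (fun _ => False) (fun u => u = (a, true)) (by
        have e := congrArg (rl (fun _ => False)) hp.1
        simp only [rl_rl] at e ⊢
        rw [e]
        apply rl_congr
        intro u _
        simp)
      have hka := hk2 (j a)
      rcases hx' with ⟨b, hb, e⟩ | ⟨b, hb, e⟩
      · have hkb := hk2 (j b)
        rw [e, hka, hja] at hkb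
        have : j b = (a, true) := by simpa using hkb
        have hba : b = a := congrArg Prod.fst this
        exact hlG a ha (hba ▸ hlS b hb)
      · have hkb := hk1 b
        rw [e, hka, hja] at hkb
        simp at hkb)
  have hcol : Col true (rl g₂ (rl j S) ++ rl g₁ V) :=
    col_append.2 ⟨rl_col (rl_col hBS), rl_col hXc.2⟩
  have hVl : X.length + V.length = n := by
    rw [← List.length_append, ← hXV]; exact hlen
  have hlf : (rl g₂ (rl j S) ++ rl g₁ V).length = S.length + V.length := by simp
  have h3 := hno _ hcol h2 (by omega)
  rw [hlf] at h3
  have : X.length = G.length + S.length := by simpa using hXl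
  omega

lemma no_small (hnc : ∀ p ∈ C.mem, p.NonCrossing) {l : ℕ}
    (hmin : ∀ j, 1 ≤ j → j < l → betaP j true ∉ C.mem) (n : ℕ) :
    n ≤ l → ∀ {α : Type} (B : List (Bool × α)), Col true B → D C B → 1 ≤ B.length →
      n ≤ B.length := by
  induction n with
  | zero => intros; omega
  | succ n ih =>
    intro hn α B hB hD h1
    have h2 := ih (by omega) B hB hD h1
    by_contra h3
    have h4 : B.length = n := by omega
    have := one_beta (lemK hnc n (ih (by omega)) B hB hD h4) hB hD
    exact hmin _ h1 (by omega) this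

lemma white_one (hnc : ∀ p ∈ C.mem, p.NonCrossing) {l : ℕ}
    (hmin : ∀ j, 1 ≤ j → j < l → betaP j true ∉ C.mem) (B : List (Bool × α)) (hB : Col true B)
    (hD : D C B) (h : B.length = l) : One B :=
  lemK hnc l (no_small hnc hmin l le_rfl) B hB hD h

/-- The words `T`. -/
def T (l : ℕ) : List Bool → List (Bool × ℕ)
  | [] => []
  | c :: cs => List.replicate l (c, 0) ++ rl Nat.succ (T l cs)

lemma T_append (l : ℕ) (cs ds : List Bool) :
    T l (cs ++ ds) = T l cs ++ rl (fun n => n + cs.length) (T l ds) := by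
  induction cs with
  | nil => simp [T]
  | cons c cs ih =>
    simp only [List.cons_append, T, ih, rl_append, rl_rl, List.length_cons, List.append_assoc]
    rfl

lemma T_lab (l : ℕ) (cs : List Bool) : ∀ n ∈ lab (T l cs), n < cs.length := by
  induction cs with
  | nil => simp [T]
  | cons c cs ih =>
    intro n hn
    simp only [T, lab_append, lab_rl, List.mem_append, List.mem_map] at hn
    rcases hn with hn | ⟨m, hm, rfl⟩
    · simp [lab] at hn
      simp [hn.2]
    · have := ih m hm
      simp; omega

lemma R_append {l : ℕ} {cs ds cs' ds' : List Bool} (h : E C (T l cs) (T l ds))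
    (h' : E C (T l cs') (T l ds')) : E C (T l (cs ++ cs')) (T l (ds ++ ds')) := by
  have inj : ∀ (k : ℕ) (A : List (Bool × ℕ)), Inj (fun n => n + k) A := by
    intro k A x _ y _ h
    simpa using h
  have dj : ∀ (cs ds : List Bool), Dj (T l cs) (rl (fun n => n + cs.length) (T l ds)) := by
    intro cs ds a ha ha'
    have := T_lab l cs a ha
    simp only [lab_rl, List.mem_map] at ha'
    obtain ⟨b, _, rfl⟩ := ha'
    omega
  rw [T_append, T_append]
  exact E_append h ((E_rl (inj _ _)).2 ((E_rl_left (inj _ _)).2 h')) (dj _ _) (dj _ _)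

lemma T_one (l : ℕ) (c : Bool) : T l [c] = rl (fun _ => 0) (th l c) := by
  simp [T, rl_th]

lemma inj_unit (f : Unit → α) (A : List (Bool × Unit)) : Inj f A := fun _ _ _ _ _ => rfl

lemma E_white (hnc : ∀ p ∈ C.mem, p.NonCrossing) {l : ℕ} (hl1 : 1 ≤ l)
    (hl : betaP l true ∈ C.mem) (hmin : ∀ j, 1 ≤ j → j < l → betaP j true ∉ C.mem) (n : ℕ) :
    ∀ {α : Type} (B : List (Bool × α)), Col true B → D C B → B.length ≤ n →
      ∃ m, E C B (T l (List.replicate m true)) := by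
  induction n with
  | zero =>
    intro α B _ _ h
    have : B = [] := List.length_eq_zero_iff.1 (by omega)
    subst this
    exact ⟨0, E_nil⟩
  | succ n ih =>
    intro α B hB hD hn
    by_cases h0 : B.length = 0
    · have : B = [] := List.length_eq_zero_iff.1 h0
      subst this
      exact ⟨0, E_nil⟩
    have hle := no_small hnc hmin l le_rfl B hB hD (by omega)
    obtain ⟨X, Y, rfl, hXl⟩ : ∃ X Y, B = X ++ Y ∧ X.length = l :=
      ⟨B.take l, B.drop l, (List.take_append_drop _ _).symm, by simp; omega⟩
    rw [col_append] at hB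
    have hb := beta_iff.1 hl
    obtain ⟨γ, g₁, g₂, hp⟩ := exists_push X (rl Sum.inl (th l true) : List (Bool × (Unit ⊕ Unit)))
      (col_fst_eq hB.1 (rl_col th_col) (by simp [hXl]))
    have h1 := E_sub (A := X ++ Y) (U := []) (V := Y) (by simpa using hD) hb hp
    simp only [rl_nil, List.nil_append, rl_rl] at h1
    have hdj : Dj (rl (fun a => g₂ (Sum.inr a)) (th l true)) (rl g₁ Y) := by
      intro x hx hx'
      simp only [lab_rl, List.mem_map] at hx hx'
      obtain ⟨⟨⟩, _, rfl⟩ := hx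
      obtain ⟨b, _, e⟩ := hx'
      obtain ⟨k, hk1, hk2⟩ := hp.2 (fun _ => False) (fun u => u = Sum.inr ()) (by
        have e := congrArg (rl (fun _ => False)) hp.1
        simp only [rl_rl] at e ⊢
        rw [e]
        apply rl_congr
        intro u _
        simp)
      have hkb := hk1 b
      rw [e, hk2] at hkb
      simp at hkb
    have h2 := D_traceLeft (E_right h1) (rl_col th_col) hdj
    obtain ⟨m, hm⟩ := ih _ (rl_col hB.2) h2 (by
      simp only [List.length_append] at hn
      simp only [rl_length]
      omega)
    refine ⟨m + 1, E_trans h1 ?_⟩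
    have h3 : E C (rl (fun a => g₂ (Sum.inr a)) (th l true)) (T l [true]) := by
      rw [T_one]
      exact (E_rl (inj_unit _ _)).2 ((E_rl_left (inj_unit _ _)).2 hb)
    have h4 : T l (List.replicate (m + 1) true) =
        T l [true] ++ rl Nat.succ (T l (List.replicate m true)) := by
      simp [List.replicate_succ, T]
    rw [h4]
    refine E_append h3 ((E_rl ?_).2 hm) hdj ?_
    · intro x _ y _ h
      exact Nat.succ_injective h
    · intro a ha ha'
      have := T_lab l _ a ha
      simp only [lab_rl, List.mem_map] at ha'
      obtain ⟨b, _, rfl⟩ := ha'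
      simp at this

end white
section black
variable {α β γ δ : Type} {C : PartitionCategory}

lemma word_dichotomy (A : List (Bool × α)) :
    (∃ A₁ A₂, A = A₁ ++ A₂ ∧ Col true A₁ ∧ Col false A₂) ∨
    ∃ U a b V, A = U ++ ((false, a) :: (true, b) :: V) := by
  induction A with
  | nil => exact Or.inl ⟨[], [], rfl, by simp [Col], by simp [Col]⟩
  | cons x A ih =>
    rcases ih with ⟨A₁, A₂, rfl, h1, h2⟩ | ⟨U, a, b, V, rfl⟩
    · obtain ⟨c, a⟩ := x
      cases c with
      | true =>
        refine Or.inl ⟨(true, a) :: A₁, A₂, rfl, ?_, h2⟩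
        intro y hy
        rcases List.mem_cons.1 hy with rfl | hy
        · rfl
        · exact h1 y hy
      | false =>
        cases A₁ with
        | nil =>
          refine Or.inl ⟨[], (false, a) :: A₂, rfl, by simp [Col], ?_⟩
          intro y hy
          rcases List.mem_cons.1 hy with rfl | hy
          · rfl
          · exact h2 y hy
        | cons y A₁ =>
          obtain ⟨c, b⟩ := y
          have : c = true := h1 (c, b) (by simp)
          subst this
          exact Or.inr ⟨[], a, b, A₁ ++ A₂, rfl⟩
    · exact Or.inr ⟨x :: U, a, b, V, rfl⟩

lemma reduction (n : ℕ) : ∀ {α : Type} (A : List (Bool × α)), D C A → A.length ≤ n →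
    ∃ (γ : Type) (A₁ A₂ : List (Bool × γ)), Col true A₁ ∧ Col false A₂ ∧ E C A (A₁ ++ A₂) := by
  induction n with
  | zero =>
    intro α A hD hn
    have : A = [] := List.length_eq_zero_iff.1 (by omega)
    subst this
    exact ⟨α, [], [], by simp [Col], by simp [Col], hD⟩
  | succ n ih =>
    intro α A hD hn
    rcases word_dichotomy A with ⟨A₁, A₂, rfl, h1, h2⟩ | ⟨U, a, b, V, rfl⟩
    · exact ⟨α, A₁, A₂, h1, h2, hD⟩
    · obtain ⟨γ, g, hE⟩ := E_cap (U := U) (X₁ := [(true, a)]) (X₂ := [(true, b)]) (V := V)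
        (A := U ++ ((false, a) :: (true, b) :: V)) (by simpa using hD) (by simp [Col])
        (by simp [Col]) rfl
      obtain ⟨γ', A₁, A₂, h1, h2, h3⟩ := ih _ (E_right hE) (by
        simp at hn ⊢
        omega)
      exact ⟨γ', A₁, A₂, h1, h2, E_trans hE h3⟩

lemma split_first (p : α → Prop) (B : List α) :
    ∃ G R, B = G ++ R ∧ (∀ x ∈ G, p x) ∧ (R = [] ∨ ∃ y R', R = y :: R' ∧ ¬ p y) := by
  induction B with
  | nil => exact ⟨[], [], rfl, by simp, Or.inl rfl⟩
  | cons y B ih =>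
    by_cases hy : p y
    · obtain ⟨G, R, rfl, hG, hR⟩ := ih
      refine ⟨y :: G, R, by simp, ?_, hR⟩
      intro x hx
      rcases List.mem_cons.1 hx with rfl | hx
      · exact hy
      · exact hG x hx
    · exact ⟨[], y :: B, by simp, by simp, Or.inr ⟨y, B, rfl, hy⟩⟩

lemma rightTrace_ex {R₁ R₂ w : List (Bool × α)} (h : L C (bar R₁ ++ w ++ R₂)) (h1 : Col false R₁)
    (h2 : Col false R₂) (hlen : R₁.length = R₂.length) :
    ∃ (γ : Type) (g : α → γ), L C (rl g w) := by
  have h3 := L_cyc (bar_col h1) (by simpa using h)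
  have h4 : E C ([] : List (Bool × Unit)) (w ++ (bar (bar R₂) ++ bar R₁) ++ []) := by
    rw [E_nil_iff]
    simpa using h3
  obtain ⟨γ, g, hg⟩ := E_cap h4 (bar_col h2) (bar_col h1) (by simp [hlen])
  rw [E_nil_iff] at hg
  exact ⟨γ, g, by simpa using hg⟩

/-- A black letter produces a black projective word or the black identity. -/
lemma black_step (hnc : ∀ p ∈ C.mem, p.NonCrossing) {A₁ A₂ : List (Bool × α)}
    (hD : D C (A₁ ++ A₂)) (h1 : Col true A₁) (h2 : Col false A₂) (hne : A₂ ≠ []) :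
    (∃ (G : List (Bool × α)), Col false G ∧ D C G ∧ G ≠ []) ∨ L C [(true, ()), (false, ())] := by
  have hq := L_traceLeft hD h1
  set j : α → α × Bool := fun a => (a, decide (a ∉ lab A₁)) with hj
  obtain ⟨G, R, rfl, hG, hR⟩ := split_first (fun x : Bool × α => x.2 ∉ lab A₁) A₂
  rw [col_append] at h2
  by_cases hGne : G = []
  · right
    subst hGne
    rcases hR with rfl | ⟨y, R', rfl, hy⟩
    · exact absurd rfl hne
    have hy : y.2 ∈ lab A₁ := not_not.1 hy
    obtain ⟨c, v⟩ := y
    have hc : c = false := h2.2 (c, v) (by simp)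
    subst hc
    have hjv : j v = (v, false) := by simpa [hj] using hy
    have hR' : Col false R' := fun x hx => h2.2 x (by simp [hx])
    obtain ⟨γ, g, hg⟩ := rightTrace_ex (R₁ := rl (fun a => (a, false)) R') (R₂ := rl j R')
      (w := [(true, (v, false)), (false, (v, false))]) (by simpa [hjv] using hq) (rl_col hR')
      (rl_col hR') (by simp)
    have := (L_rl (C := C) (w := [(true, ()), (false, ())]) (f := fun _ => g (v, false))
      (fun _ _ _ _ _ => rfl)).1 (by simpa using hg)
    exact this
  · left
    refine ⟨G, h2.1, ?_, hGne⟩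
    have hlG : ∀ a ∈ lab G, a ∉ lab A₁ := by
      intro a ha
      simp only [lab, List.mem_map] at ha
      obtain ⟨x, hx, rfl⟩ := ha
      exact hG x hx
    have hdj : ∀ a ∈ lab G, a ∉ lab R := by
      intro b hbG hbR
      rcases hR with rfl | ⟨y, R', rfl, hy⟩
      · simp at hbR
      have hy : y.2 ∈ lab A₁ := not_not.1 hy
      have hby : b ≠ y.2 := by
        rintro rfl
        exact hlG _ hbG hy
      have hbR' : b ∈ lab R' := by
        simp only [lab_cons, List.mem_cons] at hbR
        exact hbR.resolve_left hby
      obtain ⟨c₁, s₁⟩ := mem_lab_sub hy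
      obtain ⟨c₂, s₂⟩ := mem_lab_sub hbG
      obtain ⟨c₄, s₄⟩ := mem_lab_sub hbR'
      have s₃ : [(y.1, y.2)].Sublist [y] := List.Sublist.refl _
      have := s₁.append (s₂.append (s₃.append s₄))
      exact hby (D_nc hnc hD this).symm
    have hjG : rl j G = rl (fun a => (a, true)) G := by
      apply rl_congr
      intro a ha
      simpa [hj] using hlG a ha
    have h3 := L_rightTrace (R₁ := rl (fun a => (a, false)) R) (R₂ := rl j R)
      (w := bar (rl (fun a => (a, false)) G) ++ rl (fun a => (a, true)) G)
      (by rw [← hjG]; simpa using hq) (rl_col h2.2) (rl_col h2.2) (by simp) (by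
        intro z hz hz'
        have e1 : z.1 ∈ lab G := by
          simp only [lab_append, lab_bar, lab_rl, List.mem_append, List.mem_reverse,
            List.mem_map] at hz
          rcases hz with ⟨a, ha, rfl⟩ | ⟨a, ha, rfl⟩ <;> exact ha
        have e2 : z.1 ∈ lab R := by
          simp only [lab_append, lab_rl, List.mem_append, List.mem_map] at hz'
          rcases hz' with ⟨a, ha, rfl⟩ | ⟨a, ha, rfl⟩ <;> exact ha
        exact hdj _ e1 e2)
    refine (L_rl' (f := Sum.elim (fun a => (a, false)) (fun a => (a, true))) ?_).1 ?_
    · rintro (a | a) (b | b) h <;> simpa using h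
    · simpa [bar_rl] using h3

lemma black_of_id {l : ℕ} (hl : betaP l true ∈ C.mem) (hb : L C [(true, ()), (false, ())]) :
    betaP l false ∈ C.mem := by
  have hD := beta_iff.1 hl
  obtain ⟨n, Z, e, hZ, hn, he⟩ := exists_idw (th l false) false th_col
  have hz := L_id (c := false) (by simpa using hb) Z hZ hn
  have hZl : Z.length = l := by
    have := congrArg List.length he
    simpa using this
  have hbz : Col true (bar Z) := bar_col hZ
  have := L_sub (C := C) (U := []) (X := bar Z) (V := Z) (X' := rl Sum.inl (th l true))
    (Y := rl Sum.inr (th l true)) (fun _ => (Sum.inl () : Unit ⊕ Unit)) id (by simpa using hz) hD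
    (by
      rw [rl_rl]
      exact col_rl_eq hbz th_col (by simp [hZl]) _) (by
      intro h₁ h₂ hh
      have e1 : rl h₂ (rl Sum.inl (th l true)) = rl (fun _ => h₂ (Sum.inl ())) (bar Z) := by
        rw [rl_rl]
        exact col_rl_eq (th_col (n := l) (c := true)) hbz (by simp [hZl]) (h₂ (Sum.inl ()))
      rw [e1] at hh
      have hh := rl_inj hh
      refine ⟨h₂, ?_, fun _ _ => rfl⟩
      intro a ha
      exact (hh a (by simpa using ha)).symm)
  have h2 : rl (fun _ => (Sum.inl () : Unit ⊕ Unit)) Z = rl Sum.inl (th l false) := by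
    exact col_rl_eq hZ th_col (by simp [hZl]) _
  rw [h2] at this
  have h3 := (L_rl' (C := C) (Equiv.sumComm Unit Unit).injective).2 this
  rw [beta_iff]
  unfold D E
  rw [bar_rl, bar_th]
  simpa using h3

lemma black_of_D (hnc : ∀ p ∈ C.mem, p.NonCrossing) {l : ℕ} (hl1 : 1 ≤ l)
    (hl : betaP l true ∈ C.mem) (hmin : ∀ j, 1 ≤ j → j < l → betaP j true ∉ C.mem) (n : ℕ) :
    ∀ {α : Type} (G : List (Bool × α)), Col false G → D C G → G ≠ [] → G.length ≤ n →
      betaP l false ∈ C.mem := by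
  have hD := beta_iff.1 hl
  induction n with
  | zero =>
    intro α G _ _ h0 h
    exact absurd (List.length_eq_zero_iff.1 (by omega)) h0
  | succ n ih =>
    intro α G hG hDG h0 hn
    have hpos : 1 ≤ G.length := List.length_pos_iff.2 h0
    have hT := E_tensor hDG hD
    rcases lt_trichotomy G.length l with hlt | heq | hgt
    · exfalso
      have hsplit : th l true = th G.length true ++ th (l - G.length) true := by
        simp only [th, List.replicate_append_replicate]
        congr 1
        omega
      obtain ⟨γ, g, hg⟩ := E_cap (C := C) (A := tn G (th l true)) (U := [])
        (X₁ := bar (rl Sum.inl G)) (X₂ := rl Sum.inr (th G.length true))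
        (V := rl Sum.inr (th (l - G.length) true)) (by
          have : tn G (th l true) = [] ++ (bar (bar (rl Sum.inl G)) ++
              rl Sum.inr (th G.length true)) ++ rl Sum.inr (th (l - G.length) true) := by
            rw [hsplit]
            simp [tn]
          rw [← this]
          exact hT) (bar_col (rl_col hG)) (rl_col th_col) (by simp)
      have h2 := no_small hnc hmin l le_rfl _ (rl_col (rl_col th_col)) (E_right hg) (by
        simp; omega)
      simp at h2
      omega
    · obtain ⟨γ, g, hg⟩ := E_cap (C := C) (A := tn G (th l true)) (U := [])
        (X₁ := bar (rl Sum.inl G)) (X₂ := rl Sum.inr (th l true)) (V := []) (by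
          have : tn G (th l true) = [] ++ (bar (bar (rl Sum.inl G)) ++
              rl Sum.inr (th l true)) ++ [] := by
            simp [tn]
          rw [← this]
          exact hT) (bar_col (rl_col hG)) (rl_col th_col) (by simp [heq])
      have h1 : L C (tn G (th l true)) := E_nil_iff.1 (E_symm hg)
      have h2 : E C (bar G) (th l true) := by
        rw [E_bar]
        simpa using h1
      have h3 := white_one hnc hmin (bar G) (bar_col hG) (E_left h2) (by simp [heq])
      have h4 : One G := by
        intro a ha b hb
        exact h3 a (by simpa using ha) b (by simpa using hb)
      have := one_beta h4 hG hDG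
      rwa [heq] at this
    · obtain ⟨G', G'', rfl, hG''⟩ : ∃ G' G'', G = G' ++ G'' ∧ G''.length = l :=
        ⟨G.take (G.length - l), G.drop (G.length - l), (List.take_append_drop _ _).symm, by
          simp; omega⟩
      rw [col_append] at hG
      obtain ⟨γ, g, hg⟩ := E_cap (C := C) (A := tn (G' ++ G'') (th l true)) (U := rl Sum.inl G')
        (X₁ := bar (rl Sum.inl G'')) (X₂ := rl Sum.inr (th l true)) (V := []) (by
          have : tn (G' ++ G'') (th l true) = rl Sum.inl G' ++ (bar (bar (rl Sum.inl G'')) ++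
              rl Sum.inr (th l true)) ++ [] := by
            simp [tn]
          rw [← this]
          exact hT) (bar_col (rl_col hG.2)) (rl_col th_col) (by simp [hG''])
      simp only [List.length_append] at hn hgt
      refine ih _ (rl_col ?_) (E_right hg) ?_ ?_
      · simpa using rl_col hG.1
      · intro h
        have := congrArg List.length h
        simp at this
        simp [this] at hgt
        omega
      · simp
        omega

lemma R_pair {l : ℕ} {c : Bool} (h : betaP l c ∈ C.mem) : E C (T l []) (T l [!c, c]) := by
  have hD := beta_iff.1 h
  change E C [] _
  rw [E_nil_iff]
  have h1 := (L_rl' (C := C) (f := Sum.elim (fun _ : Unit => 0) (fun _ : Unit => 1)) (by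
    rintro (⟨⟩ | ⟨⟩) (⟨⟩ | ⟨⟩) h <;> simp at h ⊢)).2 hD
  rw [bar_rl, bar_th] at h1
  have e : T l [!c, c] = List.replicate l (!c, 0) ++ List.replicate l (c, 1) := by
    simp [T, rl]
  rw [e]
  rw [rl_append, rl_rl, rl_rl, rl_th, rl_th] at h1
  exact h1

lemma R_refl {l : ℕ} (h : ∀ c, betaP l c ∈ C.mem) (cs : List Bool) : E C (T l cs) (T l cs) := by
  induction cs with
  | nil => exact E_nil
  | cons c cs ih =>
    have h1 : E C (T l [c]) (T l [c]) := by
      rw [T_one]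
      exact (E_rl (inj_unit _ _)).2 ((E_rl_left (inj_unit _ _)).2 (beta_iff.1 (h c)))
    exact R_append h1 ih

lemma R_cancel {l : ℕ} (h : ∀ c, betaP l c ∈ C.mem) (a b : ℕ) :
    E C (T l (List.replicate a true ++ List.replicate b false))
      (T l (List.replicate (a + 1) true ++ List.replicate (b + 1) false)) := by
  have h1 := R_append (R_append (R_refl h (List.replicate a true)) (R_pair (h false)))
    (R_refl h (List.replicate b false))
  have e : List.replicate (a + 1) true ++ List.replicate (b + 1) false =
    List.replicate a true ++ [!false, false] ++ List.replicate b false := by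
    rw [List.replicate_succ', List.replicate_succ]
    simp
  rw [e]
  simpa using h1

lemma R_wb {l : ℕ} (h : ∀ c, betaP l c ∈ C.mem) (m : ℕ) :
    E C (T l []) (T l (List.replicate m true ++ List.replicate m false)) := by
  induction m with
  | zero => exact R_refl h []
  | succ m ih => exact E_trans ih (R_cancel h m m)

lemma R_final {l : ℕ} (h : ∀ c, betaP l c ∈ C.mem) (a b : ℕ) :
    ∃ m c, E C (T l (List.replicate a true ++ List.replicate b false))
      (T l (List.replicate m c)) := by
  induction a generalizing b with
  | zero => exact ⟨b, false, by simpa using R_refl h (List.replicate b false)⟩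
  | succ a ih =>
    cases b with
    | zero => exact ⟨a + 1, true, by simpa using R_refl h (List.replicate (a + 1) true)⟩
    | succ b =>
      obtain ⟨m, c, hm⟩ := ih b
      exact ⟨m, c, E_trans (E_symm (R_cancel h a b)) hm⟩

lemma T_col (l : ℕ) (m : ℕ) (c : Bool) : Col c (T l (List.replicate m c)) := by
  induction m with
  | zero => simp [T, Col]
  | succ m ih =>
    rw [List.replicate_succ, T, col_append]
    exact ⟨col_replicate, rl_col ih⟩

lemma T_length (l : ℕ) (cs : List Bool) : (T l cs).length = cs.length * l := by
  induction cs with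
  | nil => simp [T]
  | cons c cs ih =>
    simp only [T, List.length_append, List.length_replicate, rl_length, ih, List.length_cons]
    ring

lemma T_tn (l : ℕ) (cs ds : List Bool) (X : List (Bool × α)) :
    E C X (T l (cs ++ ds)) ↔ E C X (tn (T l cs) (T l ds)) := by
  have : T l (cs ++ ds) = rl (Sum.elim id (fun n => n + cs.length)) (tn (T l cs) (T l ds)) := by
    rw [T_append]
    simp [tn]
  rw [this, E_rl]
  intro x hx y hy
  simp only [tn, lab_append, lab_rl, List.mem_append, List.mem_map] at hx hy
  rcases hx with ⟨a, ha, rfl⟩ | ⟨a, ha, rfl⟩ <;> rcases hy with ⟨b, hb, rfl⟩ | ⟨b, hb, rfl⟩ <;>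
    simp only [Sum.elim_inl, Sum.elim_inr, id] <;> intro e
  · rw [e]
  · have := T_lab l cs a ha
    omega
  · have := T_lab l cs b hb
    omega
  · rw [Nat.add_right_cancel e]

theorem word_main (hnc : ∀ p ∈ C.mem, p.NonCrossing) {l : ℕ} (hl1 : 1 ≤ l)
    (hl : betaP l true ∈ C.mem) (hmin : ∀ j, 1 ≤ j → j < l → betaP j true ∉ C.mem)
    (A : List (Bool × α)) (hD : D C A) : ∃ m c, E C A (T l (List.replicate m c)) := by
  obtain ⟨γ, A₁, A₂, h1, h2, hE⟩ := reduction A.length A hD le_rfl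
  have hD' := E_right hE
  suffices h : ∃ m c, E C (A₁ ++ A₂) (T l (List.replicate m c)) by
    obtain ⟨m, c, h⟩ := h
    exact ⟨m, c, E_trans hE h⟩
  by_cases hne : A₂ = []
  · subst hne
    rw [List.append_nil] at hD' ⊢
    obtain ⟨m, hm⟩ := E_white hnc hl1 hl hmin _ A₁ h1 hD' le_rfl
    exact ⟨m, true, hm⟩
  have hbl : betaP l false ∈ C.mem := by
    rcases black_step hnc hD' h1 h2 hne with ⟨G, hG, hDG, hGne⟩ | h
    · exact black_of_D hnc hl1 hl hmin _ G hG hDG hGne le_rfl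
    · exact black_of_id hl h
  have hall : ∀ c, betaP l c ∈ C.mem := by
    intro c
    cases c
    · exact hbl
    · exact hl
  set m := A₂.length with hm
  set B := A₁ ++ A₂ with hB
  set W := T l (List.replicate m true) with hW
  set N := T l (List.replicate m false) with hN
  have hWc : Col true W := T_col l m true
  have hWl : m ≤ W.length := by
    rw [hW, T_length, List.length_replicate]
    nlinarith
  -- capping
  obtain ⟨W₁, W₂, hW12, hW1⟩ : ∃ W₁ W₂, W = W₁ ++ W₂ ∧ W₁.length = m :=
    ⟨W.take m, W.drop m, (List.take_append_drop _ _).symm, by simp; omega⟩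
  have hWc' : Col true W₁ ∧ Col true W₂ := by rw [← col_append, ← hW12]; exact hWc
  have hBW : D C (tn B W) := E_tensor hD' (R_refl hall _)
  obtain ⟨γ', g, hg⟩ := E_cap (C := C) (A := tn B W) (U := rl Sum.inl A₁)
    (X₁ := bar (rl Sum.inl A₂)) (X₂ := rl Sum.inr W₁) (V := rl Sum.inr W₂) (by
      have : tn B W = rl Sum.inl A₁ ++ (bar (bar (rl Sum.inl A₂)) ++ rl Sum.inr W₁) ++
          rl Sum.inr W₂ := by
        rw [hB, hW12]
        simp [tn]
      rw [← this]
      exact hBW) (bar_col (rl_col h2)) (rl_col hWc'.1) (by simp [hW1, hm])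
  obtain ⟨m', hm'⟩ := E_white hnc hl1 hl hmin _ _
    (rl_col (col_append.2 ⟨rl_col h1, rl_col hWc'.2⟩)) (E_right hg) le_rfl
  have h3 : E C (tn B W) (T l (List.replicate m' true)) := E_trans hg hm'
  have h4 := E_tensor h3 (R_refl hall (List.replicate m false))
  rw [← T_tn] at h4
  have h5 : E C ([] : List (Bool × ℕ)) (tn W N) := by
    rw [← T_tn]
    exact R_wb hall m
  have h6 := E_tensor hD' h5
  have e1 : tn B ([] : List (Bool × ℕ)) = rl Sum.inl B := by simp [tn]
  rw [e1, E_rl_left (fun x _ y _ h => Sum.inl_injective h)] at h6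
  have e2 : tn B (tn W N) = rl (Equiv.sumAssoc γ ℕ ℕ) (tn (tn B W) N) := by
    simp [tn]
  rw [e2, E_rl (fun x _ y _ h => (Equiv.sumAssoc γ ℕ ℕ).injective h)] at h6
  obtain ⟨mm, c, hmc⟩ := R_final hall m' m
  exact ⟨mm, c, E_trans (E_trans h6 h4) hmc⟩

end black
section fin
variable {α β γ δ : Type} {C : PartitionCategory}

/-- The partition with unrelated upper row `A` and lower row `B`. -/
def Q (A : List (Bool × α)) (B : List (Bool × β)) : CPartition :=
  Part (rl (Sum.inl : α → α ⊕ β) A) (rl Sum.inr B)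

lemma Q_reflect (A : List (Bool × α)) (B : List (Bool × β)) : reflect (Q A B) = Q B A := by
  unfold Q
  rw [part_reflect, ← part_rl Sum.swap]
  · simp
  · intro x _ y _ h
    simpa using congrArg Sum.swap h

lemma Q_vcomp (A : List (Bool × α)) (B : List (Bool × β)) (G : List (Bool × γ))
    (h : (Q A B).l = (Q B G).k) : vcomp (Q A B) (Q B G) h = Q A G := by
  have := part_vcomp (rl (Sum.inl : α → α ⊕ β) A) (rl Sum.inr B) (rl (Sum.inl : β → β ⊕ γ) B)
    (rl Sum.inr G)
    (Sum.elim Sum.inl (fun b => Sum.inr (Sum.inl b)) : α ⊕ β → α ⊕ (β ⊕ γ)) Sum.inr (by simp) (by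
      intro h₁ h₂ hh
      refine ⟨Sum.elim (fun a => h₁ (Sum.inl a)) h₂, ?_, ?_⟩
      · intro a ha
        simp only [lab_rl, List.mem_map] at ha
        obtain ⟨b, _, rfl⟩ := ha
        rfl
      · intro a ha
        rfl) h
  refine this.trans ?_
  unfold Q
  rw [← part_rl (Sum.map id Sum.inr : α ⊕ γ → α ⊕ (β ⊕ γ))]
  · simp
  · intro x _ y _ h
    exact (Sum.map_injective.2 ⟨Function.injective_id, Sum.inr_injective⟩) h

lemma vcomp_congr {p p' q q' : CPartition} (hp : p = p') (hq : q = q') (h : p.l = q.k)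
    (h' : p'.l = q'.k) : vcomp p q h = vcomp p' q' h' := by
  subst hp hq
  rfl

lemma Q_equiv {A : List (Bool × α)} {B : List (Bool × β)} (h : E C A B) :
    EquivIn C.mem (Q A A) (Q B B) := by
  refine ⟨Q A B, M_iff.2 h, ?_, ?_⟩
  · rw [vcomp_congr rfl (Q_reflect A B) rfl (by simp [Q, Part]), Q_vcomp]
  · rw [vcomp_congr (Q_reflect A B) rfl rfl (by simp [Q, Part]), Q_vcomp]

lemma Q_tensor (A : List (Bool × α)) (A' : List (Bool × β)) :
    tensor (Q A A) (Q A' A') = Q (tn A A') (tn A A') := by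
  unfold Q
  rw [part_tensor, ← part_rl (Equiv.sumSumSumComm α α β β)]
  · simp [tn]
  · intro x _ y _ h
    exact (Equiv.sumSumSumComm α α β β).injective h

lemma Q_rl {A : List (Bool × α)} {f : α → β} (hf : Inj f A) : Q (rl f A) (rl f A) = Q A A := by
  unfold Q
  rw [← part_rl (Sum.map f f : α ⊕ α → β ⊕ β) (rl Sum.inl A) (rl Sum.inr A)]
  · simp
  · intro x hx y hy h
    simp only [lab_append, lab_rl, List.mem_append, List.mem_map] at hx hy
    rcases hx with ⟨a, ha, rfl⟩ | ⟨a, ha, rfl⟩ <;> rcases hy with ⟨b, hb, rfl⟩ | ⟨b, hb, rfl⟩ <;>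
      simp only [Sum.map_inl, Sum.map_inr, Sum.inl.injEq, Sum.inr.injEq, reduceCtorEq] at h ⊢
    · exact hf a ha b hb h
    · exact hf a ha b hb h

lemma T_tn_eq (l : ℕ) (cs ds : List Bool) : Q (T l (cs ++ ds)) (T l (cs ++ ds)) =
    Q (tn (T l cs) (T l ds)) (tn (T l cs) (T l ds)) := by
  have : T l (cs ++ ds) = rl (Sum.elim id (fun n => n + cs.length)) (tn (T l cs) (T l ds)) := by
    rw [T_append]
    simp [tn]
  rw [this, Q_rl]
  intro x hx y hy
  simp only [tn, lab_append, lab_rl, List.mem_append, List.mem_map] at hx hy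
  rcases hx with ⟨a, ha, rfl⟩ | ⟨a, ha, rfl⟩ <;> rcases hy with ⟨b, hb, rfl⟩ | ⟨b, hb, rfl⟩ <;>
    simp only [Sum.elim_inl, Sum.elim_inr, id] <;> intro e
  · rw [e]
  · have := T_lab l cs a ha
    omega
  · have := T_lab l cs b hb
    omega
  · rw [Nat.add_right_cancel e]

lemma tpow_eq (l : ℕ) (c : Bool) (m : ℕ) :
    tpow (betaP l c) m = Q (T l (List.replicate m c)) (T l (List.replicate m c)) := by
  induction m with
  | zero =>
    change betaP 0 true = Q (rl (fun _ => 0) (th 0 true)) (rl (fun _ => 0) (th 0 true))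
    rw [Q_rl (inj_unit _ _)]
    exact betaP_eq 0 true
  | succ m ih =>
    rw [List.replicate_succ', T_tn_eq, ← Q_tensor, ← ih, T_one, Q_rl (inj_unit _ _)]
    exact congrArg (tensor _) (betaP_eq l c)

lemma nonthrough {p : CPartition} (ht : p.t = 0) (i : Fin p.k) (j : Fin p.l) :
    ¬ p.rel.r (Sum.inl i) (Sum.inr j) := by
  intro h
  have : Finite (Quotient p.rel) := Quotient.finite _
  have hz : Nat.card {c : Quotient p.rel // p.IsThrough c} = 0 := ht
  rw [Nat.card_eq_zero] at hz
  rcases hz with hz | hz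
  · exact hz.false ⟨Quotient.mk p.rel (Sum.inl i), ⟨i, rfl⟩, ⟨j, (Quotient.sound h).symm⟩⟩
  · exact hz.not_finite inferInstance

lemma proj_eq {p : CPartition} (hp : p.IsProjective) (ht : p.t = 0) :
    ∃ (α : Type) (A : List (Bool × α)), p = Q A A := by
  have hnt := fun i j => nonthrough ht i j
  obtain ⟨h, -, hr⟩ := hp
  clear ht
  rcases p with ⟨k, l, uc, lc, rel⟩
  change l = k at h
  subst h
  simp only [reflect, CPartition.mk.injEq, heq_eq_eq, true_and] at hr
  obtain ⟨hc, -, hrel⟩ := hr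
  subst hc
  have hsw : ∀ x y, rel.r x y ↔ rel.r x.swap y.swap := by
    intro x y
    conv_lhs => rw [← hrel]
    exact Iff.rfl
  refine ⟨Quotient rel, List.ofFn (fun i => (lc i, Quotient.mk rel (Sum.inl i))), ?_⟩
  refine part_of _ _ _ (Sum.map (fun i => Quotient.mk rel (Sum.inl i))
    (fun i => Quotient.mk rel (Sum.inl i))) (by simp) (by simp) ?_ ?_ ?_
  · intro i
    simp [rl]
  · intro i
    simp [rl]
  · rintro (i | i) (j | j)
    · simp only [Sum.map_inl, Sum.inl.injEq]
      exact Quotient.eq.symm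
    · simp only [Sum.map_inl, Sum.map_inr, reduceCtorEq, iff_false]
      exact hnt i j
    · simp only [Sum.map_inl, Sum.map_inr, reduceCtorEq, iff_false]
      exact fun h => hnt j i (rel.symm h)
    · simp only [Sum.map_inr, Sum.inr.injEq]
      rw [hsw]
      exact Quotient.eq.symm

theorem final (hnc : ∀ p ∈ C.mem, p.NonCrossing) (l : ℕ) (hl1 : 1 ≤ l)
    (hl : betaP l true ∈ C.mem) (hmin : ∀ j, 1 ≤ j → j < l → betaP j true ∉ C.mem)
    (p : CPartition) (hpC : p ∈ C.mem) (hp : p.IsProjective) (ht : p.t = 0) :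
      ∃ m : ℕ, EquivIn C.mem p (tpow (betaP l true) m) ∨
        EquivIn C.mem p (tpow (betaP l false) m) := by
  obtain ⟨α, A, rfl⟩ := proj_eq hp ht
  have hD : D C A := M_iff.1 hpC
  obtain ⟨m, c, h⟩ := word_main hnc hl1 hl hmin A hD
  have := Q_equiv h
  rw [← tpow_eq] at this
  refine ⟨m, ?_⟩
  cases c
  · exact Or.inr this
  · exact Or.inl this

end fin

end NT

/-- let `C` be a category of noncrossing colored partitions and
`l ≥ 1` the smallest positive integer with `β_l ∈ C`. Then every projective
partition `p ∈ C` with no through-blocks is equivalent in `C` to `β_l^{⊗m}` or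
to `β_{-l}^{⊗m}` for some `m ≥ 0`; in particular the group of equivalence
classes of non-through projective partitions of `C` is cyclic (generated by the
class of `β_l`). -/
theorem nonThrough_classification (C : PartitionCategory)
    (hnc : ∀ p ∈ C.mem, p.NonCrossing)
    (l : ℕ) (hl1 : 1 ≤ l) (hl : betaP l true ∈ C.mem)
    (hmin : ∀ j, 1 ≤ j → j < l → betaP j true ∉ C.mem) :
    ∀ p ∈ C.mem, p.IsProjective → p.t = 0 →
      ∃ m : ℕ, EquivIn C.mem p (tpow (betaP l true) m) ∨
        EquivIn C.mem p (tpow (betaP l false) m) := by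
  exact NT.final hnc l hl1 hl hmin
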